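/- arXiv:2506.06258 — 6 statements merged into one kernel-verified Lean document; each statement's English description precedes it below -/
import Mathlib

section
/- Consider the Eisenberg–Gale program: minimize \sum_{i=1}^n -w_i \log t_i over x \in \mathbb{R}^{n\times m} and t \in \mathbb{R}^n subject to \sum_{i=1}^n x_{ij} = 1 for every j, t_i = \sum_{j=1}^m u_{ij} x_{ij} for every i, x_{ij} \ge 0 for all i,j, and t_i > 0 for all i. If (x, t) and (\tilde{x}, \tilde{t}) are both optimal solutions of this program, then t = \tilde{t}; that is, the optimal t-component is unique. -/
/-!
The utility vectors `t` of feasible points form a convex set, as a linear projection of the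
feasible set. On positive vectors the objective is a sum of strictly convex functions of separate
coordinates, hence strictly convex. A strictly convex function has at most one minimizer on a
convex set.
-/

open BigOperators

noncomputable section

/-- Feasibility for the Eisenberg–Gale program. -/
def EGFeasible (n m : ℕ) (u : Fin n → Fin m → ℝ)
    (x : Fin n → Fin m → ℝ) (t : Fin n → ℝ) : Prop :=
  (∀ j, ∑ i, x i j = 1) ∧
  (∀ i, t i = ∑ j, u i j * x i j) ∧
  (∀ i j, 0 ≤ x i j) ∧
  (∀ i, 0 < t i)

/-- Objective of the Eisenberg–Gale program (in minimization form). -/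
def EGObj (n : ℕ) (w : Fin n → ℝ) (t : Fin n → ℝ) : ℝ :=
  ∑ i, -(w i) * Real.log (t i)

/-- Optimality for the Eisenberg–Gale program. -/
def EGOptimal (n m : ℕ) (u : Fin n → Fin m → ℝ) (w : Fin n → ℝ)
    (x : Fin n → Fin m → ℝ) (t : Fin n → ℝ) : Prop :=
  EGFeasible n m u x t ∧
  ∀ x' t', EGFeasible n m u x' t' → EGObj n w t ≤ EGObj n w t'

theorem strictConvexOn_univ_pi_sum {𝕜 ι β : Type*} [Semiring 𝕜] [PartialOrder 𝕜] [Fintype ι]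
    {E : ι → Type*} [∀ i, AddCommMonoid (E i)] [∀ i, Module 𝕜 (E i)]
    [AddCommMonoid β] [PartialOrder β] [IsOrderedCancelAddMonoid β] [Module 𝕜 β]
    {s : ∀ i, Set (E i)} {f : ∀ i, E i → β} (hf : ∀ i, StrictConvexOn 𝕜 (s i) (f i)) :
    StrictConvexOn 𝕜 (Set.univ.pi s) fun x => ∑ i, f i (x i) := by
  refine ⟨convex_pi fun i _ => (hf i).1, fun x hx y hy hxy a b ha hb hab => ?_⟩
  obtain ⟨k, hk⟩ := Function.ne_iff.mp hxy
  have le_coord (i : ι) : f i (a • x i + b • y i) ≤ a • f i (x i) + b • f i (y i) :=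
    (hf i).convexOn.2 (hx i trivial) (hy i trivial) ha.le hb.le hab
  have lt_coord : f k (a • x k + b • y k) < a • f k (x k) + b • f k (y k) :=
    (hf k).2 (hx k trivial) (hy k trivial) hk ha hb hab
  calc ∑ i, f i (a • x i + b • y i)
      < ∑ i, (a • f i (x i) + b • f i (y i)) :=
        Finset.sum_lt_sum (fun i _ => le_coord i) ⟨k, Finset.mem_univ k, lt_coord⟩
    _ = a • ∑ i, f i (x i) + b • ∑ i, f i (y i) := by
        rw [Finset.sum_add_distrib, Finset.smul_sum, Finset.smul_sum]

theorem strictConvexOn_const_smul {𝕜 E β : Type*} [CommSemiring 𝕜] [PartialOrder 𝕜]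
    [AddCommMonoid E] [SMul 𝕜 E] [AddCommMonoid β] [PartialOrder β] [Module 𝕜 β]
    [PosSMulStrictMono 𝕜 β] {s : Set E} {f : E → β} {c : 𝕜} (hc : 0 < c)
    (hf : StrictConvexOn 𝕜 s f) : StrictConvexOn 𝕜 s fun x => c • f x :=
  ⟨hf.1, fun x hx y hy hxy a b ha hb hab =>
    calc c • f (a • x + b • y)
        < c • (a • f x + b • f y) := smul_lt_smul_of_pos_left (hf.2 hx hy hxy ha hb hab) hc
      _ = a • c • f x + b • c • f y := by rw [smul_add, smul_comm c, smul_comm c]⟩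

theorem strictConvexOn_neg_mul_log {c : ℝ} (hc : 0 < c) :
    StrictConvexOn ℝ (Set.Ioi 0) fun r => -c * Real.log r := by
  simpa only [Pi.neg_apply, smul_eq_mul, mul_neg, neg_mul] using
    strictConvexOn_const_smul hc strictConcaveOn_log_Ioi.neg

section EisenbergGale

variable {n m : ℕ} {u : Fin n → Fin m → ℝ} {w : Fin n → ℝ}
  {x : Fin n → Fin m → ℝ} {t : Fin n → ℝ}

theorem strictConvexOn_egObj (hw : ∀ i, 0 < w i) :
    StrictConvexOn ℝ (Set.univ.pi fun _ => Set.Ioi 0) (EGObj n w) :=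
  strictConvexOn_univ_pi_sum fun i => strictConvexOn_neg_mul_log (hw i)

theorem EGFeasible.smul_add_smul {x' : Fin n → Fin m → ℝ} {t' : Fin n → ℝ}
    (h : EGFeasible n m u x t) (h' : EGFeasible n m u x' t')
    {a b : ℝ} (ha : 0 ≤ a) (hb : 0 ≤ b) (hab : a + b = 1) :
    EGFeasible n m u (a • x + b • x') (a • t + b • t') := by
  obtain ⟨hx, ht, hx₀, ht₀⟩ := h
  obtain ⟨hx', ht', hx₀', ht₀'⟩ := h'
  refine ⟨fun j => ?_, fun i => ?_, fun i j => ?_, fun i => ?_⟩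
  · calc ∑ i, (a * x i j + b * x' i j)
        = a * ∑ i, x i j + b * ∑ i, x' i j := by
          rw [Finset.sum_add_distrib, Finset.mul_sum, Finset.mul_sum]
      _ = 1 := by rw [hx, hx', mul_one, mul_one, hab]
  · calc a * t i + b * t' i
        = ∑ j, (a * (u i j * x i j) + b * (u i j * x' i j)) := by
          rw [ht, ht', Finset.sum_add_distrib, Finset.mul_sum, Finset.mul_sum]
      _ = ∑ j, u i j * (a * x i j + b * x' i j) := Finset.sum_congr rfl fun j _ => by ring
  · exact convex_Ici (0 : ℝ) (hx₀ i j) (hx₀' i j) ha hb hab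
  · exact convex_Ioi (0 : ℝ) (ht₀ i) (ht₀' i) ha hb hab

/-- The set of utility vectors `t` attained by feasible points of the Eisenberg–Gale program,
on which the program becomes the minimization of `EGObj`. -/
def egUtilitySet (n m : ℕ) (u : Fin n → Fin m → ℝ) : Set (Fin n → ℝ) :=
  {t | ∃ x, EGFeasible n m u x t}

theorem convex_egUtilitySet (u : Fin n → Fin m → ℝ) : Convex ℝ (egUtilitySet n m u) :=
  fun _ ⟨x, hx⟩ _ ⟨x', hx'⟩ a b ha hb hab =>
    ⟨a • x + b • x', hx.smul_add_smul hx' ha hb hab⟩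

theorem egUtilitySet_subset_pi_Ioi (u : Fin n → Fin m → ℝ) :
    egUtilitySet n m u ⊆ Set.univ.pi fun _ => Set.Ioi 0 :=
  fun _ ⟨_, _, _, _, ht₀⟩ i _ => ht₀ i

theorem EGOptimal.mem_egUtilitySet (h : EGOptimal n m u w x t) : t ∈ egUtilitySet n m u :=
  ⟨x, h.1⟩

theorem EGOptimal.isMinOn (h : EGOptimal n m u w x t) :
    IsMinOn (EGObj n w) (egUtilitySet n m u) t :=
  isMinOn_iff.mpr fun t' ⟨x', hx'⟩ => h.2 x' t' hx'

end EisenbergGale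

theorem eg_optimal_t_unique_general {n m : ℕ} {u : Fin n → Fin m → ℝ} {w : Fin n → ℝ}
    (hw : ∀ i, 0 < w i) {x x' : Fin n → Fin m → ℝ} {t t' : Fin n → ℝ}
    (hopt : EGOptimal n m u w x t) (hopt' : EGOptimal n m u w x' t') : t = t' :=
  have strictConvex : StrictConvexOn ℝ (egUtilitySet n m u) (EGObj n w) :=
    (strictConvexOn_egObj hw).subset (egUtilitySet_subset_pi_Ioi u) (convex_egUtilitySet u)
  strictConvex.eq_of_isMinOn hopt.isMinOn hopt'.isMinOn
    hopt.mem_egUtilitySet hopt'.mem_egUtilitySet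

/-- The optimal `t`-component of the Eisenberg–Gale program is unique. -/
theorem eg_optimal_t_unique (n m : ℕ) (u : Fin n → Fin m → ℝ) (w : Fin n → ℝ)
    (hu : ∀ i j, 0 ≤ u i j)
    (hrow : ∀ i, ∃ j, 0 < u i j)
    (hcol : ∀ j, ∃ i, 0 < u i j)
    (hw : ∀ i, 0 < w i)
    (x : Fin n → Fin m → ℝ) (t : Fin n → ℝ)
    (x' : Fin n → Fin m → ℝ) (t' : Fin n → ℝ)
    (hopt : EGOptimal n m u w x t) (hopt' : EGOptimal n m u w x' t') :
    t = t' :=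
  eg_optimal_t_unique_general hw hopt hopt'

end
end

section
/- Suppose (x, t, p, y) satisfies the KKT system of the Fisher market problem. Then \sum_{j=1}^m p_j = \sum_{i=1}^n w_i, and p_j > 0 for every j. -/
/-!
By complementary slackness each consumer's expenditure `∑ j, x i j * p j` equals `t i * y i = w i`,
and since every good is fully allocated, total expenditure is `∑ j, p j`. For positivity, `t i ≥ 0`
and `t i * y i = w i > 0` force `y i > 0`, so `p j ≥ u i j * y i > 0` for any consumer `i` who
values good `j`.
-/

open BigOperators

/-- The KKT system of the Fisher market problem. -/
def FisherKKT (n m : ℕ) (u : Fin n → Fin m → ℝ) (w : Fin n → ℝ)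
    (x : Fin n → Fin m → ℝ) (t : Fin n → ℝ) (p : Fin m → ℝ) (y : Fin n → ℝ) : Prop :=
  (∀ i, t i * y i = w i) ∧
  (∀ i j, x i j * (p j - u i j * y i) = 0) ∧
  (∀ i j, 0 ≤ p j - u i j * y i) ∧
  (∀ j, ∑ i, x i j = 1) ∧
  (∀ i, t i = ∑ j, u i j * x i j) ∧
  (∀ i j, 0 ≤ x i j)

section Market

variable {ι κ R : Type*}

theorem sum_price_eq_sum_expenditure [Fintype ι] [Fintype κ] [NonAssocSemiring R]
    {x : ι → κ → R} (hsum : ∀ j, ∑ i, x i j = 1) (p : κ → R) :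
    ∑ j, p j = ∑ i, ∑ j, x i j * p j := by
  rw [Finset.sum_comm]
  simp_rw [← Finset.sum_mul, hsum, one_mul]

theorem expenditure_eq_utility_mul [Fintype κ] [CommRing R] {u x p : κ → R} {y : R}
    (hcomp : ∀ j, x j * (p j - u j * y) = 0) :
    ∑ j, x j * p j = (∑ j, u j * x j) * y := by
  rw [Finset.sum_mul]
  refine Finset.sum_congr rfl fun j _ => ?_
  linear_combination hcomp j

theorem pos_of_utility_mul_pos [Fintype κ] [Semiring R] [LinearOrder R] [IsStrictOrderedRing R]
    {u x : κ → R} {y : R} (hu : ∀ j, 0 ≤ u j) (hx : ∀ j, 0 ≤ x j)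
    (h : 0 < (∑ j, u j * x j) * y) : 0 < y :=
  pos_of_mul_pos_right h (Finset.sum_nonneg fun j _ => mul_nonneg (hu j) (hx j))

theorem fisher_kkt_price_sum_pos_general [Fintype ι] [Fintype κ]
    [CommRing R] [LinearOrder R] [IsStrictOrderedRing R]
    {u x : ι → κ → R} {w t y : ι → R} {p : κ → R}
    (hu : ∀ i j, 0 ≤ u i j)
    (hdemand : ∀ j, ∃ i, 0 < u i j ∧ 0 < w i)
    (hbudget : ∀ i, t i * y i = w i)
    (hcomp : ∀ i j, x i j * (p j - u i j * y i) = 0)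
    (hdual : ∀ i j, 0 ≤ p j - u i j * y i)
    (hsum : ∀ j, ∑ i, x i j = 1)
    (ht : ∀ i, t i = ∑ j, u i j * x i j)
    (hx : ∀ i j, 0 ≤ x i j) :
    (∑ j, p j = ∑ i, w i) ∧ ∀ j, 0 < p j := by
  have utility_mul_eq (i : ι) : (∑ j, u i j * x i j) * y i = w i := by
    rw [← ht, hbudget]
  constructor
  · calc ∑ j, p j = ∑ i, ∑ j, x i j * p j := sum_price_eq_sum_expenditure hsum p
      _ = ∑ i, w i := Finset.sum_congr rfl fun i _ =>
          (expenditure_eq_utility_mul (hcomp i)).trans (utility_mul_eq i)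
  · intro j
    obtain ⟨i, hui, hwi⟩ := hdemand j
    have hy : 0 < y i :=
      pos_of_utility_mul_pos (hu i) (hx i) (hwi.trans_eq (utility_mul_eq i).symm)
    calc 0 < u i j * y i := mul_pos hui hy
      _ ≤ p j := sub_nonneg.mp (hdual i j)

end Market

/-- At any KKT point of the Fisher market problem, the prices sum to the total
budget and every price is positive. -/
theorem fisher_kkt_price_sum_pos (n m : ℕ) (u : Fin n → Fin m → ℝ) (w : Fin n → ℝ)
    (hu : ∀ i j, 0 ≤ u i j)
    (hrow : ∀ i, ∃ j, 0 < u i j)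
    (hcol : ∀ j, ∃ i, 0 < u i j)
    (hw : ∀ i, 0 < w i)
    (x : Fin n → Fin m → ℝ) (t : Fin n → ℝ) (p : Fin m → ℝ) (y : Fin n → ℝ)
    (hkkt : FisherKKT n m u w x t p y) :
    (∑ j, p j = ∑ i, w i) ∧ ∀ j, 0 < p j := by
  obtain ⟨hbudget, hcomp, hdual, hsum, ht, hx⟩ := hkkt
  exact fisher_kkt_price_sum_pos_general hu (fun j => (hcol j).imp fun i hi => ⟨hi, hw i⟩)
    hbudget hcomp hdual hsum ht hx
end

section
/- Let u_1, \dots, u_m \ge 0 with u_{j_0} > 0 for at least one index j_0, let \tau > 0, w > 0, and c \in \mathbb{R}^m. Define \phi(s) = s - \sum_{j=1}^m u_j \max(c_j + \tau w / s, 0) for s > 0. Then \phi is strictly increasing on (0, \infty), \phi(s) \to -\infty as s \to 0^+, \phi(s) \to +\infty as s \to +\infty, and \phi has a unique root s^\star > 0. -/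
/-!
The sum `f s = ∑ⱼ uⱼ max(cⱼ + τw/s, 0)` is continuous and antitone on `(0, ∞)`, and it blows up
at `0⁺`, because its terms are nonnegative and any term with `uⱼ > 0` does. Hence `φ = id - f` is
strictly increasing and tends to `-∞` at `0⁺`. As `f` is bounded above on `[1, ∞)` by `f 1`, `φ`
tends to `+∞` at `+∞`, and the intermediate value theorem gives the root.
-/

open BigOperators Filter

section Order

variable {α β : Type*} [AddCommGroup α] [PartialOrder α] [IsOrderedAddMonoid α] [Preorder β]
  {f g : β → α}

theorem strictMonoOn_sub_of_antitoneOn {s : Set β} (hg : StrictMonoOn g s)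
    (hf : AntitoneOn f s) :
    StrictMonoOn (fun x => g x - f x) s := by
  simpa only [sub_eq_add_neg] using hg.add_monotone hf.neg

theorem tendsto_atTop_sub_of_antitoneOn {b : β} (hg : Tendsto g atTop atTop)
    (hf : AntitoneOn f (Set.Ici b)) :
    Tendsto (fun x => g x - f x) atTop atTop := by
  have hbound : ∀ᶠ x in atTop, -f b ≤ -f x := by
    filter_upwards [eventually_ge_atTop b] with x hx
    exact neg_le_neg (hf Set.self_mem_Ici hx hx)
  simpa only [sub_eq_add_neg] using tendsto_atTop_add_right_of_le' atTop (-f b) hg hbound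

end Order

section FinsetSum

variable {ι α β : Type*} [AddCommMonoid α] [Preorder α] [IsOrderedAddMonoid α]
  {t : Finset ι} {f : ι → β → α}

theorem antitoneOn_finsetSum [Preorder β] {s : Set β} (hf : ∀ i ∈ t, AntitoneOn (f i) s) :
    AntitoneOn (fun x => ∑ i ∈ t, f i x) s :=
  fun _ hx _ hy hxy => Finset.sum_le_sum fun i hi => hf i hi hx hy hxy

theorem tendsto_atTop_finsetSum_of_nonneg {l : Filter β} (hf : ∀ i ∈ t, ∀ x, 0 ≤ f i x)
    {k : ι} (hk : k ∈ t) (hfk : Tendsto (f k) l atTop) :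
    Tendsto (fun x => ∑ i ∈ t, f i x) l atTop :=
  tendsto_atTop_mono
    (fun x => Finset.single_le_sum (f := fun i => f i x) (fun i hi => hf i hi x) hk) hfk

end FinsetSum

section Topology

theorem tendsto_atBot_sub_of_tendsto_nhds {α β : Type*} [AddCommGroup α] [LinearOrder α]
    [IsOrderedAddMonoid α] [TopologicalSpace α] [OrderTopology α] {l : Filter β} {f g : β → α}
    {C : α} (hg : Tendsto g l (nhds C)) (hf : Tendsto f l atTop) :
    Tendsto (fun x => g x - f x) l atBot := by
  simpa only [sub_eq_add_neg, Function.comp_apply] using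
    hg.add_atBot (tendsto_neg_atTop_atBot.comp hf)

theorem existsUnique_mem_and_eq_of_tendsto {X α : Type*} [TopologicalSpace X] [LinearOrder α]
    [TopologicalSpace α] [OrderClosedTopology α] {s : Set X} (hs : IsPreconnected s)
    {l₁ l₂ : Filter X} [NeBot l₁] [NeBot l₂] (hl₁ : l₁ ≤ 𝓟 s) (hl₂ : l₂ ≤ 𝓟 s) {f : X → α}
    (hf : ContinuousOn f s) (hinj : s.InjOn f) (hbot : Tendsto f l₁ atBot)
    (htop : Tendsto f l₂ atTop) (y : α) : ∃! x, x ∈ s ∧ f x = y := by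
  obtain ⟨x, hx, rfl⟩ := hs.intermediate_value_Iii hl₁ hl₂ hf hbot htop (Set.mem_univ y)
  exact ⟨x, ⟨hx, rfl⟩, fun _ hz => hinj hz.1 hx hz.2⟩

end Topology

section PositivePart

variable {𝕜 ι : Type*} [Field 𝕜] [LinearOrder 𝕜] [IsStrictOrderedRing 𝕜] {a : 𝕜}
  {t : Finset ι} {u : ι → 𝕜}

theorem antitoneOn_max_const_add_div (c : 𝕜) (ha : 0 ≤ a) :
    AntitoneOn (fun s => max (c + a / s) 0) (Set.Ioi 0) := by
  intro s (hs : 0 < s) r _ hsr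
  dsimp only
  gcongr

theorem antitoneOn_sum_mul_max_const_add_div (c : ι → 𝕜) (hu : ∀ j ∈ t, 0 ≤ u j) (ha : 0 ≤ a) :
    AntitoneOn (fun s => ∑ j ∈ t, u j * max (c j + a / s) 0) (Set.Ioi 0) :=
  antitoneOn_finsetSum fun j hj =>
    (monotone_mul_left_of_nonneg (hu j hj)).comp_antitoneOn (antitoneOn_max_const_add_div (c j) ha)

variable [TopologicalSpace 𝕜] [OrderTopology 𝕜]

theorem continuousOn_sum_mul_max_const_add_div (t : Finset ι) (u c : ι → 𝕜) (a : 𝕜) :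
    ContinuousOn (fun s => ∑ j ∈ t, u j * max (c j + a / s) 0) {0}ᶜ := by
  fun_prop (disch := simp +contextual)

theorem tendsto_max_const_add_div_nhdsGT_zero (c : 𝕜) (ha : 0 < a) :
    Tendsto (fun s => max (c + a / s) 0) (nhdsWithin 0 (Set.Ioi 0)) atTop := by
  have hdiv : Tendsto (fun s => a / s) (nhdsWithin 0 (Set.Ioi 0)) atTop := by
    simpa only [div_eq_mul_inv] using tendsto_inv_nhdsGT_zero.const_mul_atTop ha
  exact tendsto_atTop_mono (fun _ => le_max_left _ _) (tendsto_atTop_add_const_left _ c hdiv)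

theorem tendsto_sum_mul_max_const_add_div_nhdsGT_zero (c : ι → 𝕜) (hu : ∀ j ∈ t, 0 ≤ u j)
    (hpos : ∃ j ∈ t, 0 < u j) (ha : 0 < a) :
    Tendsto (fun s => ∑ j ∈ t, u j * max (c j + a / s) 0) (nhdsWithin 0 (Set.Ioi 0)) atTop := by
  obtain ⟨k, hk, huk⟩ := hpos
  exact tendsto_atTop_finsetSum_of_nonneg (fun j hj _ => mul_nonneg (hu j hj) (le_max_right _ _))
    hk ((tendsto_max_const_add_div_nhdsGT_zero (c k) ha).const_mul_atTop huk)

end PositivePart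

/-- The function `φ(s) = s - ∑ⱼ uⱼ max(cⱼ + τw/s, 0)` is strictly increasing on
`(0, ∞)`, tends to `-∞` as `s → 0⁺`, tends to `+∞` as `s → +∞`, and has a unique
positive root. -/
theorem phi_strict_mono_unique_root (m : ℕ) (u c : Fin m → ℝ) (τ w : ℝ)
    (hu : ∀ j, 0 ≤ u j) (hj : ∃ j, 0 < u j) (hτ : 0 < τ) (hw : 0 < w) :
    let φ : ℝ → ℝ := fun s => s - ∑ j, u j * max (c j + τ * w / s) 0
    StrictMonoOn φ (Set.Ioi 0) ∧
    Tendsto φ (nhdsWithin 0 (Set.Ioi 0)) atBot ∧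
    Tendsto φ atTop atTop ∧
    (∃! s : ℝ, 0 < s ∧ φ s = 0) := by
  intro φ
  have hτw : 0 < τ * w := mul_pos hτ hw
  have hsum_anti := antitoneOn_sum_mul_max_const_add_div (t := .univ) c (fun j _ => hu j) hτw.le
  have hmono : StrictMonoOn φ (Set.Ioi 0) :=
    strictMonoOn_sub_of_antitoneOn (strictMono_id.strictMonoOn _) hsum_anti
  have hbot : Tendsto φ (nhdsWithin 0 (Set.Ioi 0)) atBot :=
    tendsto_atBot_sub_of_tendsto_nhds (tendsto_id.mono_left nhdsWithin_le_nhds)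
      (tendsto_sum_mul_max_const_add_div_nhdsGT_zero c (fun j _ => hu j) (by simpa using hj) hτw)
  have htop : Tendsto φ atTop atTop :=
    tendsto_atTop_sub_of_antitoneOn tendsto_id (hsum_anti.mono (Set.Ici_subset_Ioi.2 one_pos))
  have hcont : ContinuousOn φ (Set.Ioi 0) := continuousOn_id.sub <|
    (continuousOn_sum_mul_max_const_add_div _ u c (τ * w)).mono fun _ hs => ne_of_gt hs
  exact ⟨hmono, hbot, htop, existsUnique_mem_and_eq_of_tendsto isPreconnected_Ioi
    (le_principal_iff.2 self_mem_nhdsWithin) (le_principal_iff.2 (Ioi_mem_atTop 0))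
    hcont hmono.injOn hbot htop 0⟩
end

section
/- Let \mathcal{Z}^\star denote the set of pairs (x, p) \in \mathbb{R}^{n\times m} \times \mathbb{R}^m satisfying: x_{ij} \ge 0 for all i,j; \sum_{i=1}^n x_{ij} = 1 for all j; p_j - \frac{u_{ij} w_i}{\sum_{j'=1}^m u_{ij'} x_{ij'}} \ge 0 for all i,j; and x_{ij}(p_j - \frac{u_{ij} w_i}{\sum_{j'=1}^m u_{ij'} x_{ij'}}) = 0 for all i,j. For \xi > 0 define the scaled KKT residual \mathcal{F}_\xi(x, p) as the vector with blocks (x_{ij} - \max(x_{ij} - \frac{1}{\xi}(p_j - \frac{u_{ij} w_i}{\sum_{j'} u_{ij'} x_{ij'}}), 0))_{ij}, (\min(p_j - \frac{u_{ij} w_i}{\sum_{j'} u_{ij'} x_{ij'}}, 0))_{ij}, and (\sum_{i=1}^n x_{ij} - 1)_j. Then for every R > 0 there exists \gamma > 0 such that \|\mathcal{F}_\xi(x, p)\| \ge \gamma \cdot \mathrm{dist}((x, p), \mathcal{Z}^\star) for every (x, p) with x \ge 0, \sum_{j=1}^m u_{ij} x_{ij} > 0 for all i, and \|(x, p)\|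 \le R. -/
/-!
The optimal allocations with given utilities `S i = ∑ j, u i j * x i j` form a polyhedron: they are
the nonnegative `x` with these utilities and unit column sums. Hence Hoffman's bound controls the
distance from `x` to them by the residual `r` and the deviation `δ` of the utilities of `x` from
those of a solution `z₀`. Near `z₀` the prices also deviate by `O(r + δ)`, since every good has a
buyer whose dual constraint is almost tight. Strong monotonicity of the Eisenberg-Gale gradient in
the utilities, paired with the approximate complementarity encoded by the residual, gives
`δ² = O(r * (r + δ))`, so `δ = O(r)`, and the error bound holds near `z₀`. On a bounded set with
`r ≤ 1`, the inequality `u i j * w i / S i ≤ p j + r` keeps the utilities away from zero, so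
compactness makes the local bound uniform; where `r ≥ 1` it suffices that the distance is bounded.

Division by zero being zero, `FisherKKT2` may also hold at points with some `S i = 0`. Such points
only decrease the distance, and the argument compares with solutions of positive utilities.
-/

open BigOperators

noncomputable section

/-- The space of primal-dual pairs `(x, p)` of the Fisher market problem. -/
abbrev FisherPair (n m : ℕ) := (Fin n → Fin m → ℝ) × (Fin m → ℝ)

/-- The KKT system of the PDHCG formulation of the Fisher market problem. -/
def FisherKKT2 (n m : ℕ) (u : Fin n → Fin m → ℝ) (w : Fin n → ℝ)
    (z : FisherPair n m) : Prop :=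
  (∀ i j, 0 ≤ z.1 i j) ∧
  (∀ j, ∑ i, z.1 i j = 1) ∧
  (∀ i j, 0 ≤ z.2 j - u i j * w i / ∑ j', u i j' * z.1 i j') ∧
  (∀ i j, z.1 i j * (z.2 j - u i j * w i / ∑ j', u i j' * z.1 i j') = 0)

/-- The Euclidean norm of a pair `(x, p)`. -/
def pairNorm (n m : ℕ) (z : FisherPair n m) : ℝ :=
  Real.sqrt ((∑ i, ∑ j, (z.1 i j) ^ 2) + (∑ j, (z.2 j) ^ 2))

/-- The Euclidean distance from a pair to a set of pairs. -/
def pairDist (n m : ℕ) (z : FisherPair n m) (S : Set (FisherPair n m)) : ℝ :=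
  sInf {d : ℝ | ∃ z' ∈ S, d = pairNorm n m (z - z')}

/-- The Euclidean norm of the scaled KKT residual `𝓕_ξ(x, p)`. -/
def FResidNorm2 (n m : ℕ) (u : Fin n → Fin m → ℝ) (w : Fin n → ℝ) (ξ : ℝ)
    (z : FisherPair n m) : ℝ :=
  Real.sqrt
    ((∑ i, ∑ j,
        (z.1 i j -
          max (z.1 i j - ξ⁻¹ * (z.2 j - u i j * w i / ∑ j', u i j' * z.1 i j')) 0) ^ 2) +
     (∑ i, ∑ j, (min (z.2 j - u i j * w i / ∑ j', u i j' * z.1 i j') 0) ^ 2) +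
     (∑ j, ((∑ i, z.1 i j) - 1) ^ 2))

open Asymptotics Filter Set Topology
open scoped NNReal

/-! ### The Hoffman bound for nonnegative solutions of linear equations -/

theorem exists_norm_le_mul_norm_map_of_isClosed_cone {E F : Type*} [NormedAddCommGroup E]
    [NormedSpace ℝ E] [ProperSpace E] [NormedAddCommGroup F] [NormedSpace ℝ F] (A : E →L[ℝ] F)
    {K : Set E} (hK : IsClosed K) (hsmul : ∀ c : ℝ, 0 < c → ∀ y ∈ K, c • y ∈ K)
    (hker : ∀ y ∈ K, A y = 0 → y = 0) :
    ∃ C : ℝ≥0, ∀ y ∈ K, ‖y‖ ≤ C * ‖A y‖ := by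
  have hcompact : IsCompact (Metric.sphere 0 1 ∩ K) := (isCompact_sphere 0 1).inter_right hK
  have hne : ∀ y ∈ Metric.sphere 0 1 ∩ K, ‖A y‖ ≠ 0 := fun y hy h ↦
    ne_zero_of_mem_unit_sphere (⟨y, hy.1⟩ : Metric.sphere (0 : E) 1)
      (hker y hy.2 (norm_eq_zero.1 h))
  obtain ⟨C, hC⟩ := hcompact.exists_bound_of_continuousOn
    (A.continuous.norm.continuousOn.inv₀ hne)
  refine ⟨C.toNNReal, fun y hy ↦ ?_⟩
  rcases eq_or_ne y 0 with rfl | hy0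
  · simp
  have hpos : 0 < ‖y‖ := norm_pos_iff.2 hy0
  have hA : 0 < ‖A y‖ := norm_pos_iff.2 fun h ↦ hy0 (hker y hy h)
  have hbound := hC (‖y‖⁻¹ • y) ⟨by simp [norm_smul, hpos.ne'], hsmul _ (inv_pos.2 hpos) y hy⟩
  rw [Pi.inv_apply, map_smul, norm_inv, norm_norm, norm_smul, norm_inv, norm_norm, mul_inv, inv_inv,
    ← div_eq_mul_inv, div_le_iff₀ hA] at hbound
  exact hbound.trans (mul_le_mul_of_nonneg_right C.le_coe_toNNReal hA.le)

/-- The closed cone of vectors each of whose coordinates is zero or has the sign `s i`. Only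
finitely many such cones exist in finite dimension, which makes the Hoffman constant uniform. -/
def signCone {ι : Type*} (s : ι → SignType) : Set (EuclideanSpace ℝ ι) :=
  {v | ∀ i, v i * s i = |v i|}

theorem isClosed_signCone {ι : Type*} (s : ι → SignType) : IsClosed (signCone s) := by
  simp only [signCone, Set.ofPred_forall]
  exact isClosed_iInter fun i ↦ isClosed_eq (by fun_prop) (by fun_prop)

theorem smul_mem_signCone {ι : Type*} {s : ι → SignType} {c : ℝ} (hc : 0 ≤ c)
    {v : EuclideanSpace ℝ ι} (hv : v ∈ signCone s) : c • v ∈ signCone s := fun i ↦ by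
  rw [PiLp.smul_apply, smul_eq_mul, mul_assoc, hv i, abs_mul, abs_of_nonneg hc]

theorem mul_eq_abs_mul_abs_of_mem_signCone {ι : Type*} {y v : EuclideanSpace ℝ ι}
    (hv : v ∈ signCone fun i ↦ SignType.sign (y i)) (i : ι) : y i * v i = |y i| * |v i| := by
  rw [← hv i, mul_left_comm, abs_mul_sign, mul_comm]

theorem eq_zero_of_mem_signCone_of_apply_eq_zero {ι : Type*} {y v : EuclideanSpace ℝ ι}
    (hv : v ∈ signCone fun i ↦ SignType.sign (y i)) {i : ι} (hy : y i = 0) : v i = 0 := by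
  simpa [hy] using (hv i).symm

theorem eq_zero_of_mem_signCone_of_inner_nonpos {ι : Type*} [Fintype ι] {y v : EuclideanSpace ℝ ι}
    (hv : v ∈ signCone fun i ↦ SignType.sign (y i)) (h : inner ℝ y v ≤ 0) : v = 0 := by
  have hinner : inner ℝ y v = ∑ i, |y i| * |v i| := by
    simp_rw [← mul_eq_abs_mul_abs_of_mem_signCone hv, PiLp.inner_apply, RCLike.inner_apply',
      conj_trivial]
  have hterm : ∀ i ∈ Finset.univ, 0 ≤ |y i| * |v i| := fun i _ ↦ by positivity
  have hzero := (Finset.sum_eq_zero_iff_of_nonneg hterm).1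
    (le_antisymm (hinner ▸ h) (Finset.sum_nonneg hterm))
  ext i
  rcases mul_eq_zero.1 (hzero i (Finset.mem_univ i)) with hy | hvi
  · exact eq_zero_of_mem_signCone_of_apply_eq_zero hv (abs_eq_zero.1 hy)
  · exact abs_eq_zero.1 hvi

theorem exists_pos_forall_add_smul_nonneg {ι : Type*} [Finite ι] {x v : EuclideanSpace ℝ ι}
    (hx : ∀ i, 0 ≤ x i) (hv : ∀ i, v i < 0 → 0 < x i) :
    ∃ t > (0 : ℝ), ∀ i, 0 ≤ (x + t • v) i := by
  have hnonneg : ∀ i, ∀ᶠ t : ℝ in 𝓝[>] 0, 0 ≤ (x + t • v) i := fun i ↦ by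
    rcases le_or_gt 0 (v i) with hvi | hvi
    · filter_upwards [self_mem_nhdsWithin] with t ht
      exact add_nonneg (hx i) (mul_nonneg ht.le hvi)
    · have htendsto : Tendsto (fun t : ℝ ↦ (x + t • v) i) (𝓝 0) (𝓝 (x i)) := by
        have hcont : Continuous fun t : ℝ ↦ x i + t * v i := by fun_prop
        simpa using hcont.tendsto 0
      exact (htendsto.eventually_const_le (hv i hvi)).filter_mono nhdsWithin_le_nhds
  exact (eventually_mem_nhdsWithin.and (eventually_all.2 hnonneg)).exists

theorem exists_pos_forall_add_smul_nonneg_of_mem_signCone {ι : Type*} [Finite ι]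
    {x x' v : EuclideanSpace ℝ ι} (hx : ∀ i, 0 ≤ x i) (hx' : ∀ i, 0 ≤ x' i)
    (hv : v ∈ signCone fun i ↦ SignType.sign ((x - x') i)) :
    ∃ t > (0 : ℝ), ∀ i, 0 ≤ (x' + t • v) i := by
  refine exists_pos_forall_add_smul_nonneg hx' fun i hvi ↦ ?_
  have hle : (x - x') i ≤ 0 := by
    refine nonpos_of_mul_nonneg_left ?_ hvi
    rw [mul_eq_abs_mul_abs_of_mem_signCone hv i]
    positivity
  have hne : (x - x') i ≠ 0 := fun h ↦ hvi.ne (eq_zero_of_mem_signCone_of_apply_eq_zero hv h)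
  have hlt : x i - x' i < 0 := lt_of_le_of_ne hle hne
  linarith [hx i]

theorem exists_forall_inner_sub_nonpos {E : Type*} [NormedAddCommGroup E] [InnerProductSpace ℝ E]
    [CompleteSpace E] {P : Set E} (hne : P.Nonempty) (hclosed : IsClosed P) (hconv : Convex ℝ P)
    (x : E) : ∃ x' ∈ P, ∀ z ∈ P, inner ℝ (x - x') (z - x') ≤ 0 := by
  obtain ⟨x', hx', hmin⟩ := exists_norm_eq_iInf_of_complete_convex hne hclosed.isComplete hconv x
  exact ⟨x', hx', (norm_eq_iInf_iff_real_inner_le_zero hconv hx').1 hmin⟩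

/-- For `x'` take the Euclidean projection of `x` to the feasible set. Moving `x'` slightly along a
vector `v` of the kernel of `A` with the sign pattern of `x - x'` stays feasible and approaches `x`,
so `v = 0`. Thus `x - x'` lies in one of finitely many closed cones that meet the kernel only in
`0`. -/
theorem exists_hoffman_bound_nonneg {ι F : Type*} [Fintype ι] [NormedAddCommGroup F]
    [NormedSpace ℝ F] (A : EuclideanSpace ℝ ι →L[ℝ] F) :
    ∃ C : ℝ≥0, ∀ x x₀ : EuclideanSpace ℝ ι, (∀ i, 0 ≤ x i) → (∀ i, 0 ≤ x₀ i) →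
      ∃ x' : EuclideanSpace ℝ ι, (∀ i, 0 ≤ x' i) ∧ A x' = A x₀ ∧ ‖x - x'‖ ≤ C * ‖A x - A x₀‖ := by
  let pointed : Set (ι → SignType) := {s | ∀ v ∈ signCone s, A v = 0 → v = 0}
  obtain ⟨C, hC⟩ : ∃ C : ℝ≥0, ∀ y ∈ ⋃ s ∈ pointed, signCone s, ‖y‖ ≤ C * ‖A y‖ := by
    refine exists_norm_le_mul_norm_map_of_isClosed_cone A
      (pointed.toFinite.isClosed_biUnion fun s _ ↦ isClosed_signCone s) ?_ ?_ <;>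
      simp only [mem_iUnion₂]
    · rintro c hc y ⟨s, hs, hy⟩
      exact ⟨s, hs, smul_mem_signCone hc.le hy⟩
    · rintro y ⟨s, hs, hy⟩
      exact hs y hy
  refine ⟨C, fun x x₀ hx hx₀ ↦ ?_⟩
  let P : Set (EuclideanSpace ℝ ι) := {z | ∀ i, 0 ≤ z i} ∩ A ⁻¹' {A x₀}
  have hclosed : IsClosed P := by
    refine IsClosed.inter ?_ (isClosed_singleton.preimage A.continuous)
    simp only [Set.ofPred_forall]
    exact isClosed_iInter fun i ↦ isClosed_le continuous_const (by fun_prop)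
  have hconv : Convex ℝ P :=
    Convex.inter (fun y hy z hz a b ha hb _ i ↦
        add_nonneg (mul_nonneg ha (hy i)) (mul_nonneg hb (hz i)))
      ((convex_singleton _).linear_preimage A.toLinearMap)
  obtain ⟨x', ⟨hx', hA : A x' = A x₀⟩, hproj⟩ :=
    exists_forall_inner_sub_nonpos (P := P) ⟨x₀, hx₀, rfl⟩ hclosed hconv x
  refine ⟨x', hx', hA, ?_⟩
  rw [← hA, ← map_sub]
  refine hC _ (mem_iUnion₂.2 ⟨fun i ↦ SignType.sign ((x - x') i), fun v hv hAv ↦ ?_,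
    fun i ↦ self_mul_sign _⟩)
  obtain ⟨t, ht, hfeas⟩ := exists_pos_forall_add_smul_nonneg_of_mem_signCone hx hx' hv
  have hinner := hproj (x' + t • v) ⟨hfeas, by simp [hAv, hA]⟩
  rw [add_sub_cancel_left, real_inner_smul_right] at hinner
  exact eq_zero_of_mem_signCone_of_inner_nonpos hv (nonpos_of_mul_nonpos_right hinner ht)

/-! ### Asymptotic comparison -/

theorem isBigO_of_norm_sq_isBigO_mul {α E F : Type*} [SeminormedAddCommGroup E]
    [SeminormedAddCommGroup F] {l : Filter α} {f : α → E} {g : α → F}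
    (h : (fun a ↦ ‖f a‖ ^ 2) =O[l] fun a ↦ ‖g a‖ * ‖(g a, f a)‖) : f =O[l] g := by
  obtain ⟨C, hbound⟩ := h.bound
  refine IsBigO.of_bound (max 1 C) (hbound.mono fun a ha ↦ ?_)
  rw [norm_pow, norm_norm, norm_mul, norm_norm, norm_norm, Prod.norm_mk] at ha
  rcases le_or_gt ‖f a‖ ‖g a‖ with hfg | hgf
  · exact hfg.trans (le_mul_of_one_le_left (norm_nonneg _) (le_max_left 1 C))
  · rw [max_eq_right hgf.le, sq, ← mul_assoc] at ha
    exact (le_of_mul_le_mul_right ha ((norm_nonneg _).trans_lt hgf)).trans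
      (mul_le_mul_of_nonneg_right (le_max_right 1 C) (norm_nonneg _))

theorem isBigO_principal_of_isCompact {α E F : Type*} [TopologicalSpace α]
    [SeminormedAddCommGroup E] [SeminormedAddCommGroup F] {s : Set α} (hs : IsCompact s)
    {f : α → E} {g : α → F} (h : ∀ a ∈ s, f =O[𝓝[s] a] g) : f =O[𝓟 s] g := by
  refine hs.induction_on (p := fun t ↦ f =O[𝓟 t] g) (by simp)
    (fun t t' htt' ht' ↦ ht'.mono (principal_mono.2 htt'))
    (fun t t' ht ht' ↦ sup_principal ▸ ht.sup ht') fun a ha ↦ ?_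
  obtain ⟨C, hC⟩ := (h a ha).bound
  exact ⟨_, hC, isBigO_principal.2 ⟨C, fun _ hb ↦ hb⟩⟩

theorem pi_norm_sq_le_sum_sq {ι : Type*} [Fintype ι] (a : ι → ℝ) : ‖a‖ ^ 2 ≤ ∑ i, a i ^ 2 := by
  have hnonneg : 0 ≤ ∑ i, a i ^ 2 := Finset.sum_nonneg fun i _ ↦ sq_nonneg (a i)
  refine (Real.le_sqrt (norm_nonneg a) hnonneg).1 ?_
  exact (pi_norm_le_iff_of_nonneg (Real.sqrt_nonneg _)).2 fun i ↦ Real.abs_le_sqrt <|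
    Finset.single_le_sum (f := fun i ↦ a i ^ 2) (fun i _ ↦ sq_nonneg (a i)) (Finset.mem_univ i)

/-! ### Utilities and the Eisenberg-Gale divergence -/

section Market

variable {ι κ : Type*} [Fintype κ]

/-- The utilities `S i = ∑ j, u i j * x i j` of the consumers at the allocation `x`. -/
def utility (u x : ι → κ → ℝ) (i : ι) : ℝ := ∑ j, u i j * x i j

theorem continuous_utility (u : ι → κ → ℝ) : Continuous (utility u) := by
  unfold utility
  fun_prop

/-- The derivatives `u i j * w i / S i` of the Eisenberg-Gale objective `∑ i, w i * log (S i)`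
with respect to `x i j`. Where `S i = 0`, division by zero makes them `0`. -/
def marginalUtility (u : ι → κ → ℝ) (w : ι → ℝ) (x : ι → κ → ℝ) (i : ι) (j : κ) : ℝ :=
  u i j * w i / utility u x i

/-- The slack `p j - u i j * w i / S i` of the dual constraint for consumer `i` and good `j` at the
pair `z = (x, p)`. -/
def reducedCost (u : ι → κ → ℝ) (w : ι → ℝ) (z : (ι → κ → ℝ) × (κ → ℝ)) (i : ι) (j : κ) : ℝ :=
  z.2 j - marginalUtility u w z.1 i j

theorem reducedCost_eq_of_utility_eq {u x x' : ι → κ → ℝ} {w : ι → ℝ}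
    (h : utility u x' = utility u x) (p : κ → ℝ) :
    reducedCost u w (x', p) = reducedCost u w (x, p) := by
  funext i j
  simp only [reducedCost, marginalUtility, h]

theorem eventually_utility_pos [Finite ι] {u x₀ : ι → κ → ℝ} (hS : ∀ i, 0 < utility u x₀ i) :
    ∀ᶠ x in 𝓝 x₀, ∀ i, 0 < utility u x i :=
  eventually_all.2 fun i ↦
    (((continuous_apply i).comp (continuous_utility u)).tendsto x₀).eventually_const_lt (hS i)

variable [Fintype ι]

theorem marginalUtility_sub_isBigO {u : ι → κ → ℝ} (w : ι → ℝ) {x₀ : ι → κ → ℝ}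
    (hS : ∀ i, utility u x₀ i ≠ 0) :
    (fun x ↦ marginalUtility u w x - marginalUtility u w x₀) =O[𝓝 x₀]
      fun x ↦ utility u x - utility u x₀ := by
  refine isBigO_pi.2 fun i ↦ isBigO_pi.2 fun j ↦ ?_
  have hinv : (fun x ↦ (utility u x i)⁻¹ - (utility u x₀ i)⁻¹) =O[𝓝 x₀]
      fun x ↦ utility u x i - utility u x₀ i :=
    (hasDerivAt_inv (hS i)).isBigO_sub.comp_tendsto
      (((continuous_apply i).comp (continuous_utility u)).tendsto x₀)
  refine (hinv.const_mul_left (u i j * w i)).congr_left (fun x ↦ ?_) |>.trans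
    (isBigO_of_le _ fun x ↦ norm_le_pi_norm (utility u x - utility u x₀) i)
  simp only [Pi.sub_apply, marginalUtility, div_eq_mul_inv, mul_sub]

/-- The symmetrized Bregman divergence of the Eisenberg-Gale objective `-∑ i, w i * log (S i)`
between two allocations, which measures the squared difference of their utilities. -/
def symmDivergence (u : ι → κ → ℝ) (w : ι → ℝ) (x x' : ι → κ → ℝ) : ℝ :=
  ∑ i, w i * (utility u x i - utility u x' i) ^ 2 / (utility u x i * utility u x' i)

theorem symmDivergence_nonneg {u x x' : ι → κ → ℝ} {w : ι → ℝ} (hw : ∀ i, 0 ≤ w i)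
    (hS : ∀ i, 0 ≤ utility u x i) (hS' : ∀ i, 0 ≤ utility u x' i) :
    0 ≤ symmDivergence u w x x' :=
  Finset.sum_nonneg fun i _ ↦
    div_nonneg (mul_nonneg (hw i) (sq_nonneg _)) (mul_nonneg (hS i) (hS' i))

theorem utility_sub_sq_isBigO_symmDivergence {u : ι → κ → ℝ} {w : ι → ℝ} (hw : ∀ i, 0 < w i)
    {x₀ : ι → κ → ℝ} (hS : ∀ i, 0 < utility u x₀ i) (i : ι) :
    (fun x ↦ (utility u x i - utility u x₀ i) ^ 2) =O[𝓝 x₀] fun x ↦ symmDivergence u w x x₀ := by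
  have hcont : Continuous (utility u) := continuous_utility u
  have hpos : ∀ᶠ x in 𝓝 x₀, ∀ i, 0 < utility u x i := eventually_utility_pos hS
  have hcoeff : (fun x ↦ utility u x i * utility u x₀ i / w i) =O[𝓝 x₀] fun _ ↦ (1 : ℝ) :=
    Tendsto.isBigO_one ℝ (Continuous.tendsto (by fun_prop) x₀)
  have hsummand : (fun x ↦ w i * (utility u x i - utility u x₀ i) ^ 2 /
      (utility u x i * utility u x₀ i)) =O[𝓝 x₀] fun x ↦ symmDivergence u w x x₀ := by
    refine IsBigO.of_bound' (hpos.mono fun x hx ↦ ?_)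
    have hnonneg : ∀ k, 0 ≤ w k * (utility u x k - utility u x₀ k) ^ 2 /
        (utility u x k * utility u x₀ k) := fun k ↦
      div_nonneg (mul_nonneg (hw k).le (sq_nonneg _)) (mul_pos (hx k) (hS k)).le
    rw [Real.norm_of_nonneg (hnonneg i)]
    exact (Finset.single_le_sum (fun k _ ↦ hnonneg k) (Finset.mem_univ i)).trans (le_abs_self _)
  refine (hcoeff.mul hsummand).congr' (hpos.mono fun x hx ↦ ?_) (by simp)
  field_simp [(hw i).ne', (hx i).ne', (hS i).ne']

theorem norm_utility_sub_sq_isBigO_symmDivergence {u : ι → κ → ℝ} {w : ι → ℝ}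
    (hw : ∀ i, 0 < w i) {x₀ : ι → κ → ℝ} (hS : ∀ i, 0 < utility u x₀ i) :
    (fun x ↦ ‖utility u x - utility u x₀‖ ^ 2) =O[𝓝 x₀] fun x ↦ symmDivergence u w x x₀ := by
  have hsum := IsBigO.fun_sum (s := Finset.univ) fun i _ ↦
    utility_sub_sq_isBigO_symmDivergence hw hS i
  refine IsBigO.trans (IsBigO.of_norm_le fun x ↦ ?_) hsum
  rw [norm_pow, norm_norm]
  exact pi_norm_sq_le_sum_sq (utility u x - utility u x₀)

theorem sum_sum_mul_reducedCost {u : ι → κ → ℝ} {w : ι → ℝ} (z : (ι → κ → ℝ) × (κ → ℝ)) :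
    ∑ i, ∑ j, z.1 i j * reducedCost u w z i j =
      ∑ j, (∑ i, z.1 i j) * z.2 j - ∑ i, utility u z.1 i * (w i / utility u z.1 i) := by
  have hprices : ∑ j, (∑ i, z.1 i j) * z.2 j = ∑ i, ∑ j, z.1 i j * z.2 j := by
    rw [Finset.sum_comm]
    simp_rw [Finset.sum_mul]
  have hspending : ∀ i, utility u z.1 i * (w i / utility u z.1 i) =
      ∑ j, z.1 i j * marginalUtility u w z.1 i j := fun i ↦ by
    conv_lhs => enter [1]; rw [utility]
    rw [Finset.sum_mul]
    refine Finset.sum_congr rfl fun j _ ↦ ?_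
    rw [marginalUtility]
    ring
  simp_rw [hprices, hspending, ← Finset.sum_sub_distrib, ← mul_sub, reducedCost]

theorem sum_sum_mul_reducedCost_sub {u : ι → κ → ℝ} {w : ι → ℝ} {z z' : (ι → κ → ℝ) × (κ → ℝ)}
    (hS : ∀ i, utility u z.1 i ≠ 0) (hS' : ∀ i, utility u z'.1 i ≠ 0) :
    ∑ i, ∑ j, (z.1 i j - z'.1 i j) * (reducedCost u w z i j - reducedCost u w z' i j) =
      ∑ j, (∑ i, z.1 i j - ∑ i, z'.1 i j) * (z.2 j - z'.2 j) +
        symmDivergence u w z.1 z'.1 := by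
  have hprices : ∑ j, (∑ i, z.1 i j - ∑ i, z'.1 i j) * (z.2 j - z'.2 j) =
      ∑ i, ∑ j, (z.1 i j - z'.1 i j) * (z.2 j - z'.2 j) := by
    rw [Finset.sum_comm]
    simp_rw [← Finset.sum_sub_distrib, Finset.sum_mul]
  have hcurvature : ∀ i, w i * (utility u z.1 i - utility u z'.1 i) ^ 2 /
      (utility u z.1 i * utility u z'.1 i) =
      ∑ j, (z.1 i j - z'.1 i j) * (marginalUtility u w z'.1 i j - marginalUtility u w z.1 i j) :=
    fun i ↦ calc
      _ = (utility u z.1 i - utility u z'.1 i) *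
          (w i / utility u z'.1 i - w i / utility u z.1 i) := by
        field_simp [hS i, hS' i]
      _ = _ := by
        rw [utility, utility, ← Finset.sum_sub_distrib, Finset.sum_mul]
        refine Finset.sum_congr rfl fun j _ ↦ ?_
        simp only [marginalUtility, utility]
        ring
  simp_rw [symmDivergence, hprices, hcurvature, ← Finset.sum_add_distrib, reducedCost]
  refine Finset.sum_congr rfl fun i _ ↦ Finset.sum_congr rfl fun j _ ↦ ?_
  ring

/-- The linear map sending an allocation to the amount sold of each good and the utility of each
consumer. The optimal allocations for given prices and utilities are the nonnegative points of one
of its fibres. -/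
def demandMap (u : ι → κ → ℝ) : EuclideanSpace ℝ (ι × κ) →L[ℝ] (κ → ℝ) × (ι → ℝ) :=
  LinearMap.toContinuousLinearMap
    { toFun := fun x ↦ (fun j ↦ ∑ i, x (i, j), utility u fun i j ↦ x (i, j))
      map_add' := fun x y ↦ by
        ext <;> simp [utility, mul_add, Finset.sum_add_distrib]
      map_smul' := fun c x ↦ by
        ext <;> simp [utility, Finset.mul_sum, mul_left_comm] }

theorem exists_allocation_near (u : ι → κ → ℝ) :
    ∃ C : ℝ≥0, ∀ x x₀ : ι → κ → ℝ, (∀ i j, 0 ≤ x i j) → (∀ i j, 0 ≤ x₀ i j) →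
      ∃ x' : ι → κ → ℝ, (∀ i j, 0 ≤ x' i j) ∧ (∀ j, ∑ i, x' i j = ∑ i, x₀ i j) ∧
        utility u x' = utility u x₀ ∧
        ‖x - x'‖ ≤ C * ‖(fun j ↦ ∑ i, x i j - ∑ i, x₀ i j, utility u x - utility u x₀)‖ := by
  obtain ⟨C, hC⟩ := exists_hoffman_bound_nonneg (demandMap u)
  refine ⟨C, fun x x₀ hx hx₀ ↦ ?_⟩
  obtain ⟨x', hx', hmap, hle⟩ := hC (WithLp.toLp 2 fun k ↦ x k.1 k.2)
    (WithLp.toLp 2 fun k ↦ x₀ k.1 k.2) (fun k ↦ hx k.1 k.2) fun k ↦ hx₀ k.1 k.2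
  obtain ⟨hsold, hutility⟩ := Prod.ext_iff.1 hmap
  refine ⟨fun i j ↦ x' (i, j), fun i j ↦ hx' (i, j), fun j ↦ congr_fun hsold j, hutility,
    le_trans ?_ hle⟩
  exact (pi_norm_le_iff_of_nonneg (norm_nonneg _)).2 fun i ↦
    (pi_norm_le_iff_of_nonneg (norm_nonneg _)).2 fun j ↦
      PiLp.norm_apply_le (WithLp.toLp 2 (fun k : ι × κ ↦ x k.1 k.2) - x') (i, j)

/-- The residual `𝓕_ξ(x, p)` as a Euclidean vector, with the complementarity, dual feasibility and
market clearing blocks in this order. -/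
def kktResidual (u : ι → κ → ℝ) (w : ι → ℝ) (ξ : ℝ) (z : (ι → κ → ℝ) × (κ → ℝ)) :
    EuclideanSpace ℝ ((ι × κ ⊕ ι × κ) ⊕ κ) :=
  WithLp.toLp 2 (Sum.elim
    (Sum.elim
      (fun k ↦ z.1 k.1 k.2 - max (z.1 k.1 k.2 - ξ⁻¹ * reducedCost u w z k.1 k.2) 0)
      fun k ↦ min (reducedCost u w z k.1 k.2) 0)
    fun j ↦ (∑ i, z.1 i j) - 1)

end Market

section Fisher

variable {n m : ℕ} {u : Fin n → Fin m → ℝ} {w : Fin n → ℝ} {ξ : ℝ}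

/-! ### The norm and the distance on pairs -/

/-- The pair `(x, p)` as a vector of the Euclidean space `ℝ^(n * m + m)`. It transfers `pairNorm`,
which is not the (supremum) norm of the product type. -/
def pairToEuclidean (n m : ℕ) : FisherPair n m →L[ℝ] EuclideanSpace ℝ (Fin n × Fin m ⊕ Fin m) :=
  LinearMap.toContinuousLinearMap
    { toFun := fun z ↦ WithLp.toLp 2 (Sum.elim (fun k ↦ z.1 k.1 k.2) z.2)
      map_add' := fun z z' ↦ by ext (k | j) <;> rfl
      map_smul' := fun c z ↦ by ext (k | j) <;> rfl }

theorem pairNorm_eq_norm (z : FisherPair n m) : pairNorm n m z = ‖pairToEuclidean n m z‖ := by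
  simp only [EuclideanSpace.norm_eq, Real.norm_eq_abs, sq_abs, Fintype.sum_sum_type,
    Fintype.sum_prod_type]
  rfl

theorem norm_le_pairNorm (z : FisherPair n m) : ‖z‖ ≤ pairNorm n m z := by
  have hcoord := PiLp.norm_apply_le (pairToEuclidean n m z)
  rw [← pairNorm_eq_norm] at hcoord
  have hnonneg : 0 ≤ pairNorm n m z := Real.sqrt_nonneg _
  exact norm_prod_le_iff.2 ⟨(pi_norm_le_iff_of_nonneg hnonneg).2 fun i ↦
    (pi_norm_le_iff_of_nonneg hnonneg).2 fun j ↦ hcoord (Sum.inl (i, j)),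
    (pi_norm_le_iff_of_nonneg hnonneg).2 fun j ↦ hcoord (Sum.inr j)⟩

theorem pairDist_nonneg (z : FisherPair n m) (S : Set (FisherPair n m)) : 0 ≤ pairDist n m z S := by
  refine Real.sInf_nonneg ?_
  rintro _ ⟨z', -, rfl⟩
  exact Real.sqrt_nonneg _

theorem pairDist_le_pairNorm_sub (z : FisherPair n m) {z' : FisherPair n m}
    {S : Set (FisherPair n m)} (h : z' ∈ S) : pairDist n m z S ≤ pairNorm n m (z - z') := by
  refine csInf_le ⟨0, ?_⟩ ⟨z', h, rfl⟩
  rintro _ ⟨z'', -, rfl⟩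
  exact Real.sqrt_nonneg _

theorem pairDist_isBigO_sub {l : Filter (FisherPair n m)} {S : Set (FisherPair n m)}
    {f : FisherPair n m → FisherPair n m} (hf : ∀ᶠ z in l, f z ∈ S) :
    (fun z ↦ pairDist n m z S) =O[l] fun z ↦ z - f z := by
  refine IsBigO.of_bound ‖pairToEuclidean n m‖ (hf.mono fun z hz ↦ ?_)
  rw [Real.norm_of_nonneg (pairDist_nonneg z S)]
  refine (pairDist_le_pairNorm_sub z hz).trans ?_
  rw [pairNorm_eq_norm]
  exact (pairToEuclidean n m).le_opNorm _

theorem pairDist_isBigO_one {S : Set (FisherPair n m)} (hS : S.Nonempty) (z₀ : FisherPair n m) :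
    (fun z ↦ pairDist n m z S) =O[𝓝 z₀] fun _ ↦ (1 : ℝ) := by
  obtain ⟨z₁, hz₁⟩ := hS
  exact (pairDist_isBigO_sub (f := fun _ ↦ z₁) (.of_forall fun _ ↦ hz₁)).trans
    (Tendsto.isBigO_one ℝ ((continuous_id.sub continuous_const).tendsto z₀))

/-! ### The residual and the optimality conditions -/

theorem fisherKKT2_iff {z : FisherPair n m} : FisherKKT2 n m u w z ↔
    (∀ i j, 0 ≤ z.1 i j) ∧ (∀ j, ∑ i, z.1 i j = 1) ∧ (∀ i j, 0 ≤ reducedCost u w z i j) ∧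
      ∀ i j, z.1 i j * reducedCost u w z i j = 0 :=
  Iff.rfl

theorem fResidNorm2_eq_norm (z : FisherPair n m) :
    FResidNorm2 n m u w ξ z = ‖kktResidual u w ξ z‖ := by
  simp only [EuclideanSpace.norm_eq, Real.norm_eq_abs, sq_abs, Fintype.sum_sum_type,
    Fintype.sum_prod_type]
  rfl

theorem fResidNorm2_nonneg (z : FisherPair n m) : 0 ≤ FResidNorm2 n m u w ξ z :=
  Real.sqrt_nonneg _

theorem abs_min_le_fResidNorm2 (z : FisherPair n m) (i : Fin n) (j : Fin m) :
    |min (z.1 i j) (ξ⁻¹ * reducedCost u w z i j)| ≤ FResidNorm2 n m u w ξ z := by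
  have hmin : min (z.1 i j) (ξ⁻¹ * reducedCost u w z i j) =
      z.1 i j - max (z.1 i j - ξ⁻¹ * reducedCost u w z i j) 0 := by
    rw [← min_sub_sub_left, sub_sub_cancel, sub_zero, min_comm]
  rw [hmin, fResidNorm2_eq_norm]
  exact PiLp.norm_apply_le (kktResidual u w ξ z) (Sum.inl (Sum.inl (i, j)))

theorem neg_fResidNorm2_le_reducedCost (z : FisherPair n m) (i : Fin n) (j : Fin m) :
    -FResidNorm2 n m u w ξ z ≤ reducedCost u w z i j := by
  have habs : |min (reducedCost u w z i j) 0| ≤ FResidNorm2 n m u w ξ z := by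
    rw [fResidNorm2_eq_norm]
    exact PiLp.norm_apply_le (kktResidual u w ξ z) (Sum.inl (Sum.inr (i, j)))
  exact (abs_le.1 habs).1.trans (min_le_left _ _)

theorem abs_sum_sub_one_le_fResidNorm2 (z : FisherPair n m) (j : Fin m) :
    |(∑ i, z.1 i j) - 1| ≤ FResidNorm2 n m u w ξ z := by
  rw [fResidNorm2_eq_norm]
  exact PiLp.norm_apply_le (kktResidual u w ξ z) (Sum.inr j)

theorem FisherKKT2.fResidNorm2_eq_zero (hξ : 0 ≤ ξ) {z : FisherPair n m}
    (hz : FisherKKT2 n m u w z) : FResidNorm2 n m u w ξ z = 0 := by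
  obtain ⟨hx, hclear, hg, hcompl⟩ := fisherKKT2_iff.1 hz
  rw [fResidNorm2_eq_norm, norm_eq_zero]
  ext ((⟨i, j⟩ | ⟨i, j⟩) | j)
  · change z.1 i j - max (z.1 i j - ξ⁻¹ * reducedCost u w z i j) 0 = 0
    rcases mul_eq_zero.1 (hcompl i j) with h | h
    · rw [h, max_eq_right, sub_zero]
      exact sub_nonpos.2 (mul_nonneg (inv_nonneg.2 hξ) (hg i j))
    · rw [h, mul_zero, sub_zero, max_eq_left (hx i j), sub_self]
  · exact min_eq_right (hg i j)
  · exact sub_eq_zero.2 (hclear j)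

theorem fResidNorm2_eq_zero_iff (hξ : 0 < ξ) {z : FisherPair n m} (hx : ∀ i j, 0 ≤ z.1 i j) :
    FResidNorm2 n m u w ξ z = 0 ↔ FisherKKT2 n m u w z := by
  refine ⟨fun h ↦ fisherKKT2_iff.2 ⟨hx, fun j ↦ ?_, fun i j ↦ ?_, fun i j ↦ ?_⟩,
    FisherKKT2.fResidNorm2_eq_zero hξ.le⟩
  · exact sub_eq_zero.1 (abs_nonpos_iff.1 (h ▸ abs_sum_sub_one_le_fResidNorm2 z j))
  · simpa [h] using neg_fResidNorm2_le_reducedCost (ξ := ξ) (u := u) (w := w) z i j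
  · have hmin : min (z.1 i j) (ξ⁻¹ * reducedCost u w z i j) = 0 :=
      abs_nonpos_iff.1 (h ▸ abs_min_le_fResidNorm2 z i j)
    rcases min_choice (z.1 i j) (ξ⁻¹ * reducedCost u w z i j) with hx0 | hg0
    · rw [← hx0, hmin, zero_mul]
    · rw [hmin] at hg0
      rw [(mul_eq_zero_iff_left (inv_ne_zero hξ.ne')).1 hg0.symm, mul_zero]

theorem FisherKKT2.of_utility_eq {z : FisherPair n m} (hz : FisherKKT2 n m u w z)
    {x : Fin n → Fin m → ℝ} (hx : ∀ i j, 0 ≤ x i j) (hclear : ∀ j, ∑ i, x i j = 1)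
    (hutility : utility u x = utility u z.1) : FisherKKT2 n m u w (x, z.2) := by
  obtain ⟨-, hclear_z, hg, hcompl⟩ := fisherKKT2_iff.1 hz
  have hcost : reducedCost u w (x, z.2) = reducedCost u w z :=
    reducedCost_eq_of_utility_eq hutility z.2
  have hterm : ∀ i j, 0 ≤ x i j * reducedCost u w (x, z.2) i j := fun i j ↦
    mul_nonneg (hx i j) (hcost ▸ hg i j)
  have hsum : ∑ i, ∑ j, x i j * reducedCost u w (x, z.2) i j = 0 := by
    have hsame : ∑ i, ∑ j, x i j * reducedCost u w (x, z.2) i j =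
        ∑ i, ∑ j, z.1 i j * reducedCost u w z i j := by
      rw [sum_sum_mul_reducedCost (x, z.2), sum_sum_mul_reducedCost z]
      simp only [hutility, hclear, hclear_z]
    rw [hsame]
    exact Finset.sum_eq_zero fun i _ ↦ Finset.sum_eq_zero fun j _ ↦ hcompl i j
  refine fisherKKT2_iff.2 ⟨hx, hclear, fun i j ↦ hcost ▸ hg i j, fun i j ↦ ?_⟩
  have hrow := (Finset.sum_eq_zero_iff_of_nonneg fun i _ ↦
    Finset.sum_nonneg fun j _ ↦ hterm i j).1 hsum i (Finset.mem_univ i)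
  exact (Finset.sum_eq_zero_iff_of_nonneg fun j _ ↦ hterm i j).1 hrow j (Finset.mem_univ j)

theorem FisherKKT2.exists_reducedCost_eq_zero {z : FisherPair n m} (hz : FisherKKT2 n m u w z)
    (j : Fin m) : ∃ i, reducedCost u w z i j = 0 := by
  obtain ⟨-, hclear, -, hcompl⟩ := fisherKKT2_iff.1 hz
  obtain ⟨i, -, hi⟩ := Finset.exists_ne_zero_of_sum_ne_zero ((hclear j).trans_ne one_ne_zero)
  exact ⟨i, (mul_eq_zero.1 (hcompl i j)).resolve_left hi⟩

theorem exists_reducedCost_le {z : FisherPair n m} (hξ : 0 < ξ)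
    (hr : (n + 1) * FResidNorm2 n m u w ξ z < 1) (j : Fin m) :
    ∃ i, reducedCost u w z i j ≤ ξ * FResidNorm2 n m u w ξ z := by
  obtain ⟨i, hi⟩ : ∃ i, FResidNorm2 n m u w ξ z < z.1 i j := by
    by_contra! hle
    have hsum : ∑ i, z.1 i j ≤ n * FResidNorm2 n m u w ξ z := by
      simpa using Finset.sum_le_sum fun i (_ : i ∈ Finset.univ) ↦ hle i
    linarith [(abs_le.1 (abs_sum_sub_one_le_fResidNorm2 (u := u) (w := w) (ξ := ξ) z j)).1]
  have hmin := (le_abs_self _).trans (abs_min_le_fResidNorm2 (u := u) (w := w) (ξ := ξ) z i j)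
  exact ⟨i, (inv_mul_le_iff₀ hξ).1 ((min_le_iff.1 hmin).resolve_left hi.not_ge)⟩

theorem norm_price_sub_le {z z₀ : FisherPair n m} (hξ : 0 < ξ) (h₀ : FisherKKT2 n m u w z₀)
    (hr : (n + 1) * FResidNorm2 n m u w ξ z < 1) :
    ‖z.2 - z₀.2‖ ≤ ‖marginalUtility u w z.1 - marginalUtility u w z₀.1‖ +
      (1 + ξ) * FResidNorm2 n m u w ξ z := by
  have hnonneg : 0 ≤ FResidNorm2 n m u w ξ z := fResidNorm2_nonneg z
  have hξr : 0 ≤ ξ * FResidNorm2 n m u w ξ z := by positivity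
  refine (pi_norm_le_iff_of_nonneg (by positivity)).2 fun j ↦ ?_
  have hmarginal : ∀ i, |marginalUtility u w z.1 i j - marginalUtility u w z₀.1 i j| ≤
      ‖marginalUtility u w z.1 - marginalUtility u w z₀.1‖ := fun i ↦
    (norm_le_pi_norm ((marginalUtility u w z.1 - marginalUtility u w z₀.1) i) j).trans
      (norm_le_pi_norm _ i)
  rw [Pi.sub_apply, Real.norm_eq_abs, abs_le]
  constructor
  · obtain ⟨i, hi⟩ := h₀.exists_reducedCost_eq_zero j
    have hg := neg_fResidNorm2_le_reducedCost (u := u) (w := w) (ξ := ξ) z i j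
    unfold reducedCost at hi hg
    linarith [(abs_le.1 (hmarginal i)).1]
  · obtain ⟨i, hi⟩ := exists_reducedCost_le hξ hr j
    have hg₀ := (fisherKKT2_iff.1 h₀).2.2.1 i j
    unfold reducedCost at hi hg₀
    linarith [(abs_le.1 (hmarginal i)).2]

theorem mul_sub_le_of_abs_min_le {ξ x g x' g' r : ℝ} (hξ : 0 < ξ) (hx' : 0 ≤ x') (hg' : 0 ≤ g')
    (hc : x' * g' = 0) (hr : |min x (ξ⁻¹ * g)| ≤ r) :
    (x - x') * (g - g') ≤ r * (|g - g'| + ξ * |x - x'|) := by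
  -- The shifted pair `(x - a, g - ξ * a)` is nonnegative and exactly complementary.
  set a := min x (ξ⁻¹ * g) with ha
  have hx : 0 ≤ x - a := sub_nonneg.2 (min_le_left _ _)
  have hg : 0 ≤ g - ξ * a := sub_nonneg.2 ((le_inv_mul_iff₀ hξ).1 (min_le_right _ _))
  have hcompl : (x - a) * (g - ξ * a) = 0 := by
    rcases min_choice x (ξ⁻¹ * g) with h | h <;> rw [ha, h]
    · rw [sub_self, zero_mul]
    · rw [mul_inv_cancel_left₀ hξ.ne', sub_self, mul_zero]
  calc (x - x') * (g - g')
      = a * (g - g') + ξ * (a * (x - x')) + ((x - a) * (g - ξ * a) + x' * g') -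
          (ξ * a ^ 2 + (x - a) * g' + x' * (g - ξ * a)) := by ring
    _ ≤ a * (g - g') + ξ * (a * (x - x')) := by
        rw [hcompl, hc, add_zero, add_zero]
        exact sub_le_self _ (by positivity)
    _ ≤ |a| * |g - g'| + ξ * (|a| * |x - x'|) := by
        rw [← abs_mul, ← abs_mul]
        gcongr <;> exact le_abs_self _
    _ = |a| * (|g - g'| + ξ * |x - x'|) := by ring
    _ ≤ r * (|g - g'| + ξ * |x - x'|) := by gcongr

theorem symmDivergence_le {z z' : FisherPair n m} (hξ : 0 < ξ) (hz' : FisherKKT2 n m u w z')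
    (hS : ∀ i, utility u z.1 i ≠ 0) (hS' : ∀ i, utility u z'.1 i ≠ 0) :
    symmDivergence u w z.1 z'.1 ≤
      FResidNorm2 n m u w ξ z *
        ((∑ i, ∑ j, (|reducedCost u w z i j - reducedCost u w z' i j| +
          ξ * |z.1 i j - z'.1 i j|)) + ∑ j, |z.2 j - z'.2 j|) := by
  obtain ⟨hx', hclear', hg', hcompl'⟩ := fisherKKT2_iff.1 hz'
  rw [← sub_eq_of_eq_add' (sum_sum_mul_reducedCost_sub hS hS'), sub_eq_add_neg, mul_add,
    ← Finset.sum_neg_distrib]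
  simp_rw [Finset.mul_sum]
  refine add_le_add (Finset.sum_le_sum fun i _ ↦ Finset.sum_le_sum fun j _ ↦ ?_)
    (Finset.sum_le_sum fun j _ ↦ ?_)
  · exact mul_sub_le_of_abs_min_le hξ (hx' i j) (hg' i j) (hcompl' i j)
      (abs_min_le_fResidNorm2 z i j)
  · refine (neg_le_abs _).trans ?_
    rw [abs_mul, hclear' j]
    exact mul_le_mul_of_nonneg_right (abs_sum_sub_one_le_fResidNorm2 z j) (abs_nonneg _)

theorem continuousAt_fResidNorm2 {z₀ : FisherPair n m} (hS : ∀ i, utility u z₀.1 i ≠ 0) :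
    ContinuousAt (FResidNorm2 n m u w ξ) z₀ := by
  unfold FResidNorm2
  fun_prop (disch := exact hS _)

/-! ### The error bound near a solution -/

/-- The residual norm of `z` together with the deviation of its utilities from those of `z₀`, the
quantity to which all distances near a solution `z₀` are compared. -/
def residDeviation (u : Fin n → Fin m → ℝ) (w : Fin n → ℝ) (ξ : ℝ) (z₀ z : FisherPair n m) :
    ℝ × (Fin n → ℝ) :=
  (FResidNorm2 n m u w ξ z, utility u z.1 - utility u z₀.1)

theorem fResidNorm2_isBigO_residDeviation (z₀ : FisherPair n m) (l : Filter (FisherPair n m)) :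
    FResidNorm2 n m u w ξ =O[l] residDeviation u w ξ z₀ :=
  isBigO_fst_prod' (f' := residDeviation u w ξ z₀)

theorem utility_sub_isBigO_residDeviation (z₀ : FisherPair n m) (l : Filter (FisherPair n m)) :
    (fun z ↦ utility u z.1 - utility u z₀.1) =O[l] residDeviation u w ξ z₀ :=
  isBigO_snd_prod' (f' := residDeviation u w ξ z₀)

theorem marginalUtility_sub_isBigO_residDeviation {z₀ : FisherPair n m}
    (hS : ∀ i, utility u z₀.1 i ≠ 0) :
    (fun z ↦ marginalUtility u w z.1 - marginalUtility u w z₀.1) =O[𝓝 z₀]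
      residDeviation u w ξ z₀ :=
  ((marginalUtility_sub_isBigO w hS).comp_tendsto (continuous_fst.tendsto z₀)).trans
    (utility_sub_isBigO_residDeviation z₀ _)

theorem price_sub_isBigO_residDeviation (hξ : 0 < ξ) {z₀ : FisherPair n m}
    (h₀ : FisherKKT2 n m u w z₀) (hS : ∀ i, utility u z₀.1 i ≠ 0) :
    (fun z ↦ z.2 - z₀.2) =O[𝓝 z₀] residDeviation u w ξ z₀ := by
  have hsmall : ∀ᶠ z in 𝓝 z₀, (n + 1) * FResidNorm2 n m u w ξ z < 1 := by
    have htendsto :=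
      (continuousAt_fResidNorm2 (w := w) (ξ := ξ) hS).tendsto.const_mul ((n : ℝ) + 1)
    rw [FisherKKT2.fResidNorm2_eq_zero hξ.le h₀, mul_zero] at htendsto
    exact htendsto.eventually_lt_const one_pos
  refine IsBigO.trans (.of_norm_eventuallyLE (hsmall.mono fun z ↦ norm_price_sub_le hξ h₀)) ?_
  exact (marginalUtility_sub_isBigO_residDeviation hS).norm_left.add
    ((fResidNorm2_isBigO_residDeviation z₀ _).const_mul_left _)

theorem reducedCost_sub_isBigO_residDeviation (hξ : 0 < ξ) {z₀ : FisherPair n m}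
    (h₀ : FisherKKT2 n m u w z₀) (hS : ∀ i, utility u z₀.1 i ≠ 0) (i : Fin n) (j : Fin m) :
    (fun z ↦ reducedCost u w z i j - reducedCost u w z₀ i j) =O[𝓝 z₀] residDeviation u w ξ z₀ := by
  have hprice := isBigO_pi.1 (price_sub_isBigO_residDeviation hξ h₀ hS) j
  have hmarginal := isBigO_pi.1
    (isBigO_pi.1 (marginalUtility_sub_isBigO_residDeviation (w := w) (ξ := ξ) hS) i) j
  refine (hprice.sub hmarginal).congr_left fun z ↦ ?_
  simp only [reducedCost, Pi.sub_apply]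
  ring

theorem exists_kkt_sub_isBigO_residDeviation {z₀ : FisherPair n m} (h₀ : FisherKKT2 n m u w z₀) :
    ∃ y : FisherPair n m → Fin n → Fin m → ℝ,
      (∀ z : FisherPair n m, (∀ i j, 0 ≤ z.1 i j) →
        FisherKKT2 n m u w (y z, z₀.2) ∧ utility u (y z) = utility u z₀.1) ∧
      (fun z ↦ z.1 - y z) =O[𝓟 {z | ∀ i j, 0 ≤ z.1 i j}] residDeviation u w ξ z₀ := by
  obtain ⟨hx₀, hclear₀, -⟩ := fisherKKT2_iff.1 h₀
  obtain ⟨C, hC⟩ := exists_allocation_near u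
  choose! y hy hclear hutility hle using fun (z : FisherPair n m) hz ↦ hC z.1 z₀.1 hz hx₀
  refine ⟨y, fun z hz ↦ ⟨h₀.of_utility_eq (hy z hz) (fun j ↦ (hclear z hz j).trans (hclear₀ j))
    (hutility z hz), hutility z hz⟩, ?_⟩
  have hdemand : (fun z : FisherPair n m ↦ (fun j ↦ ∑ i, z.1 i j - ∑ i, z₀.1 i j,
      utility u z.1 - utility u z₀.1)) =O[𝓟 {z | ∀ i j, 0 ≤ z.1 i j}] residDeviation u w ξ z₀ := by
    refine IsBigO.prod_left (isBigO_pi.2 fun j ↦ ?_) (utility_sub_isBigO_residDeviation z₀ _)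
    simp only [hclear₀]
    exact (IsBigO.of_norm_le fun z ↦ abs_sum_sub_one_le_fResidNorm2 z j).trans
      (fResidNorm2_isBigO_residDeviation z₀ _)
  exact (isBigO_principal.2 ⟨C, hle⟩).trans hdemand

theorem symmDivergence_isBigO_mul_residDeviation (hw : ∀ i, 0 < w i) (hξ : 0 < ξ)
    {z₀ : FisherPair n m} (h₀ : FisherKKT2 n m u w z₀) (hS : ∀ i, 0 < utility u z₀.1 i) :
    (fun z ↦ symmDivergence u w z.1 z₀.1) =O[𝓝[{z | ∀ i j, 0 ≤ z.1 i j}] z₀]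
      fun z ↦ FResidNorm2 n m u w ξ z * ‖residDeviation u w ξ z₀ z‖ := by
  have hS_ne : ∀ i, utility u z₀.1 i ≠ 0 := fun i ↦ (hS i).ne'
  obtain ⟨y, hy, hxy⟩ := exists_kkt_sub_isBigO_residDeviation (ξ := ξ) h₀
  let B : FisherPair n m → ℝ := fun z ↦
    (∑ i, ∑ j, (|reducedCost u w z i j - reducedCost u w z₀ i j| + ξ * |z.1 i j - y z i j|)) +
      ∑ j, |z.2 j - z₀.2 j|
  have hB : B =O[𝓝[{z | ∀ i j, 0 ≤ z.1 i j}] z₀] residDeviation u w ξ z₀ := by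
    refine (IsBigO.fun_sum fun i _ ↦ IsBigO.fun_sum fun j _ ↦ ?_).add
      (IsBigO.fun_sum fun j _ ↦ ?_)
    · exact ((reducedCost_sub_isBigO_residDeviation hξ h₀ hS_ne i j).mono
        nhdsWithin_le_nhds).norm_left.add
        ((isBigO_pi.1 (isBigO_pi.1 (hxy.mono inf_le_right) i) j).norm_left.const_mul_left ξ)
    · exact (isBigO_pi.1 ((price_sub_isBigO_residDeviation hξ h₀ hS_ne).mono
        nhdsWithin_le_nhds) j).norm_left
  have hpos : ∀ᶠ z in 𝓝[{z | ∀ i j, 0 ≤ z.1 i j}] z₀, ∀ i, 0 < utility u z.1 i :=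
    nhdsWithin_le_nhds ((continuous_fst.tendsto z₀).eventually (eventually_utility_pos hS))
  have hle : ∀ᶠ z in 𝓝[{z | ∀ i j, 0 ≤ z.1 i j}] z₀,
      ‖symmDivergence u w z.1 z₀.1‖ ≤ FResidNorm2 n m u w ξ z * B z := by
    filter_upwards [hpos, self_mem_nhdsWithin] with z hSz hz
    obtain ⟨hkkt, hutility⟩ := hy z hz
    rw [Real.norm_of_nonneg (symmDivergence_nonneg (fun i ↦ (hw i).le) (fun i ↦ (hSz i).le)
      fun i ↦ (hS i).le)]
    have hbound := symmDivergence_le hξ hkkt (fun i ↦ (hSz i).ne') (hutility ▸ hS_ne)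
    simpa only [symmDivergence, hutility, reducedCost_eq_of_utility_eq hutility] using hbound
  exact (IsBigO.of_norm_eventuallyLE hle).trans ((isBigO_refl _ _).mul hB.norm_right)

theorem utility_sub_isBigO_fResidNorm2 (hw : ∀ i, 0 < w i) (hξ : 0 < ξ) {z₀ : FisherPair n m}
    (h₀ : FisherKKT2 n m u w z₀) (hS : ∀ i, 0 < utility u z₀.1 i) :
    (fun z ↦ utility u z.1 - utility u z₀.1) =O[𝓝[{z | ∀ i j, 0 ≤ z.1 i j}] z₀]
      FResidNorm2 n m u w ξ := by
  have hsq := ((norm_utility_sub_sq_isBigO_symmDivergence hw hS).comp_tendsto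
    (continuous_fst.tendsto z₀)).mono (nhdsWithin_le_nhds (s := {z | ∀ i j, 0 ≤ z.1 i j}))
  refine isBigO_of_norm_sq_isBigO_mul
    ((hsq.trans (symmDivergence_isBigO_mul_residDeviation hw hξ h₀ hS)).congr_right fun z ↦ ?_)
  rw [Real.norm_of_nonneg (fResidNorm2_nonneg z), residDeviation]

theorem pairDist_isBigO_fResidNorm2 (hw : ∀ i, 0 < w i) (hξ : 0 < ξ) {z₀ : FisherPair n m}
    (h₀ : FisherKKT2 n m u w z₀) (hS : ∀ i, 0 < utility u z₀.1 i) :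
    (fun z ↦ pairDist n m z {z' | FisherKKT2 n m u w z'}) =O[𝓝[{z | ∀ i j, 0 ≤ z.1 i j}] z₀]
      FResidNorm2 n m u w ξ := by
  obtain ⟨y, hy, hxy⟩ := exists_kkt_sub_isBigO_residDeviation (ξ := ξ) h₀
  have hresid : residDeviation u w ξ z₀ =O[𝓝[{z | ∀ i j, 0 ≤ z.1 i j}] z₀]
      FResidNorm2 n m u w ξ :=
    (isBigO_refl _ _).prod_left (utility_sub_isBigO_fResidNorm2 hw hξ h₀ hS)
  have hprice := (price_sub_isBigO_residDeviation hξ h₀ fun i ↦ (hS i).ne').mono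
    (nhdsWithin_le_nhds (s := {z | ∀ i j, 0 ≤ z.1 i j}))
  refine (pairDist_isBigO_sub (f := fun z ↦ (y z, z₀.2)) ?_).trans
    (((hxy.mono inf_le_right).prod_left hprice).trans hresid)
  exact eventually_mem_nhdsWithin.mono fun z hz ↦ (hy z hz).1

/-! ### The error bound on bounded sets -/

/-- The bounded set of nonnegative allocations and prices on which the utilities are bounded below
by `s`. For positive `s` it is compact and avoids the poles of the residual. -/
def utilityRegion (u : Fin n → Fin m → ℝ) (s : Fin n → ℝ) (R : ℝ) : Set (FisherPair n m) :=
  {z | (∀ i j, 0 ≤ z.1 i j) ∧ (∀ i, s i ≤ utility u z.1 i) ∧ pairNorm n m z ≤ R}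

theorem isCompact_utilityRegion (s : Fin n → ℝ) (R : ℝ) : IsCompact (utilityRegion u s R) := by
  refine Metric.isCompact_of_isClosed_isBounded ?_
    ((Metric.isBounded_closedBall (x := 0) (r := R)).subset fun z hz ↦
      mem_closedBall_zero_iff.2 ((norm_le_pairNorm z).trans hz.2.2))
  have hcont : Continuous (pairNorm n m) := by
    unfold pairNorm
    fun_prop
  have hutility : Continuous (utility u) := continuous_utility u
  simp only [utilityRegion, Set.ofPred_and, Set.ofPred_forall]
  refine (isClosed_iInter fun i ↦ isClosed_iInter fun j ↦ ?_).inter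
    ((isClosed_iInter fun i ↦ ?_).inter (isClosed_le hcont continuous_const))
  · exact isClosed_le continuous_const (by fun_prop)
  · exact isClosed_le continuous_const (by fun_prop)

theorem pairDist_isBigO_fResidNorm2_utilityRegion (hw : ∀ i, 0 < w i) (hξ : 0 < ξ)
    (hne : ∃ z : FisherPair n m, FisherKKT2 n m u w z) {s : Fin n → ℝ} (hs : ∀ i, 0 < s i) (R : ℝ) :
    (fun z ↦ pairDist n m z {z' | FisherKKT2 n m u w z'}) =O[𝓟 (utilityRegion u s R)]
      FResidNorm2 n m u w ξ := by
  refine isBigO_principal_of_isCompact (isCompact_utilityRegion s R) fun z₀ hz₀ ↦ ?_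
  have hS : ∀ i, 0 < utility u z₀.1 i := fun i ↦ (hs i).trans_le (hz₀.2.1 i)
  by_cases h₀ : FResidNorm2 n m u w ξ z₀ = 0
  · exact (pairDist_isBigO_fResidNorm2 hw hξ ((fResidNorm2_eq_zero_iff hξ hz₀.1).1 h₀) hS).mono
      (nhdsWithin_mono z₀ fun z hz ↦ hz.1)
  · have hcont : ContinuousAt (FResidNorm2 n m u w ξ) z₀ :=
      continuousAt_fResidNorm2 fun i ↦ (hS i).ne'
    have hone : (fun _ ↦ (1 : ℝ)) =O[𝓝 z₀] FResidNorm2 n m u w ξ :=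
      (isBigO_const_left_iff_pos_le_norm one_ne_zero).2 ⟨‖FResidNorm2 n m u w ξ z₀‖ / 2,
        half_pos (norm_pos_iff.2 h₀),
        hcont.norm.tendsto.eventually_const_le (half_lt_self (norm_pos_iff.2 h₀))⟩
    exact ((pairDist_isBigO_one hne z₀).trans hone).mono nhdsWithin_le_nhds

theorem pairDist_isBigO_fResidNorm2_of_one_le (hne : ∃ z : FisherPair n m, FisherKKT2 n m u w z)
    (R : ℝ) :
    (fun z ↦ pairDist n m z {z' | FisherKKT2 n m u w z'})
      =O[𝓟 {z | pairNorm n m z ≤ R ∧ 1 ≤ FResidNorm2 n m u w ξ z}] FResidNorm2 n m u w ξ := by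
  have hball : (fun z ↦ pairDist n m z {z' | FisherKKT2 n m u w z'})
      =O[𝓟 (Metric.closedBall 0 R)] fun _ ↦ (1 : ℝ) :=
    isBigO_principal_of_isCompact (isCompact_closedBall 0 R) fun z₀ _ ↦
      (pairDist_isBigO_one hne z₀).mono nhdsWithin_le_nhds
  have hone : (fun _ ↦ (1 : ℝ)) =O[𝓟 {z | pairNorm n m z ≤ R ∧ 1 ≤ FResidNorm2 n m u w ξ z}]
      FResidNorm2 n m u w ξ := by
    refine isBigO_principal.2 ⟨1, fun z hz ↦ ?_⟩
    rw [norm_one, one_mul]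
    exact hz.2.trans (le_abs_self _)
  exact (hball.mono (principal_mono.2 fun z hz ↦
    mem_closedBall_zero_iff.2 ((norm_le_pairNorm z).trans hz.1))).trans hone

theorem exists_pos_le_utility_of_fResidNorm2_le_one (hw : ∀ i, 0 < w i) (R : ℝ) (i : Fin n) :
    ∃ s > 0, ∀ z : FisherPair n m, (∀ i j, 0 ≤ z.1 i j) → 0 < utility u z.1 i →
      pairNorm n m z ≤ R → FResidNorm2 n m u w ξ z ≤ 1 → s ≤ utility u z.1 i := by
  by_cases hrow : ∃ j, 0 < u i j
  · obtain ⟨j, hj⟩ := hrow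
    refine ⟨u i j * w i / (|R| + 1), div_pos (mul_pos hj (hw i)) (by positivity),
      fun z _ hS hR hr ↦ ?_⟩
    have hg := neg_fResidNorm2_le_reducedCost (u := u) (w := w) (ξ := ξ) z i j
    have hprice : z.2 j ≤ |R| :=
      calc z.2 j ≤ ‖z.2‖ := (le_abs_self _).trans (norm_le_pi_norm z.2 j)
        _ ≤ pairNorm n m z := (norm_snd_le z).trans (norm_le_pairNorm z)
        _ ≤ |R| := hR.trans (le_abs_self R)
    rw [div_le_iff₀ (by positivity), ← div_le_iff₀' hS]
    change marginalUtility u w z.1 i j ≤ |R| + 1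
    unfold reducedCost at hg
    linarith
  · push Not at hrow
    refine ⟨1, one_pos, fun z hx hS _ _ ↦ absurd hS (not_lt_of_ge ?_)⟩
    exact Finset.sum_nonpos fun j _ ↦ mul_nonpos_of_nonpos_of_nonneg (hrow j) (hx i j)

end Fisher

theorem fisher_pdhcg_kkt_error_bound_general (n m : ℕ) (u : Fin n → Fin m → ℝ) (w : Fin n → ℝ)
    (hw : ∀ i, 0 < w i) (hne : ∃ z : FisherPair n m, FisherKKT2 n m u w z)
    (ξ : ℝ) (hξ : 0 < ξ) (R : ℝ) :
    ∃ γ : ℝ, 0 < γ ∧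
      ∀ z : FisherPair n m, (∀ i j, 0 ≤ z.1 i j) → (∀ i, 0 < ∑ j, u i j * z.1 i j) →
        pairNorm n m z ≤ R →
        γ * pairDist n m z {z' | FisherKKT2 n m u w z'} ≤ FResidNorm2 n m u w ξ z := by
  choose s hs hle using exists_pos_le_utility_of_fResidNorm2_le_one (u := u) (ξ := ξ) hw R
  obtain ⟨C, hC, hbound⟩ := ((pairDist_isBigO_fResidNorm2_utilityRegion hw hξ hne hs R).sup
    (pairDist_isBigO_fResidNorm2_of_one_le hne R)).exists_pos
  rw [sup_principal] at hbound
  refine ⟨C⁻¹, inv_pos.2 hC, fun z hx hS hR ↦ (inv_mul_le_iff₀ hC).2 ?_⟩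
  have hmem : z ∈ utilityRegion u s R ∪ {z | pairNorm n m z ≤ R ∧ 1 ≤ FResidNorm2 n m u w ξ z} :=
    (le_total (FResidNorm2 n m u w ξ z) 1).imp
      (fun hr ↦ ⟨hx, fun i ↦ hle i z hx (hS i) hR hr, hR⟩) fun hr ↦ ⟨hR, hr⟩
  have hz := eventually_principal.1 hbound.bound z hmem
  rwa [Real.norm_of_nonneg (pairDist_nonneg _ _), Real.norm_of_nonneg (fResidNorm2_nonneg z)] at hz

/-- KKT error bound for the PDHCG formulation of the Fisher market problem: on every
bounded region, the norm of the scaled KKT residual dominates a positive multiple of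
the distance to the KKT solution set. -/
theorem fisher_pdhcg_kkt_error_bound (n m : ℕ) (u : Fin n → Fin m → ℝ) (w : Fin n → ℝ)
    (hu : ∀ i j, 0 ≤ u i j)
    (hrow : ∀ i, ∃ j, 0 < u i j)
    (hcol : ∀ j, ∃ i, 0 < u i j)
    (hw : ∀ i, 0 < w i)
    (hne : ∃ z : FisherPair n m, FisherKKT2 n m u w z)
    (ξ : ℝ) (hξ : 0 < ξ) :
    ∀ R : ℝ, 0 < R → ∃ γ : ℝ, 0 < γ ∧
      ∀ z : FisherPair n m, (∀ i j, 0 ≤ z.1 i j) → (∀ i, 0 < ∑ j, u i j * z.1 i j) →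
        pairNorm n m z ≤ R →
        γ * pairDist n m z {z' | FisherKKT2 n m u w z'} ≤ FResidNorm2 n m u w ξ z :=
  fun R _ ↦ fisher_pdhcg_kkt_error_bound_general n m u w hw hne ξ hξ R

end
end

section
/- Suppose additionally that u_{ij} \in [0,1] for all i,j, and let E \in \mathbb{R}^{n\times m} with e_{lj} \in [0,1] for all l,j and \sum_{l=1}^n e_{lj} = 1 for every j. Let u_0, e_0 > 0 and p, q \in (0,1], and suppose: (a) for every j, the set \Phi_j = \{i : u_{ij} \ge u_0\} is nonempty and |\Phi_j| \le 2np; and (b) for every pair (l, i), |\{j : e_{lj} \ge e_0 \text{ and } u_{ij} \ge u_0\}| \ge mpq/2. Let w \in \mathbb{R}^n with w_i > 0 for all i and \sum_{i=1}^n w_i = 1, and let (x, t, \hat{p}, y) satisfy the KKT system of the Fisher market problem with budget vector w and price vector \hat{p}. Then the vector E\hat{p} \in \mathbb{R}^n satisfies \sum_{l=1}^n (E\hat{p})_l = 1 and (E\hat{p})_l \ge \frac{u_0 e_0 q}{4n} for every l. -/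
/-!
By complementary slackness and market clearing, total expenditure `∑ j, p̂ j` equals the total
budget, and a column-stochastic `E` preserves it.

For the lower bound, each good `j` satisfies `u0 * y i ≤ p̂ j` for all `i` in
`Φ j = {i | u0 ≤ u i j}`, so `u0 * ∑ i ∈ Φ j, y i ≤ 2 n p * p̂ j`. Summing this over the goods with
`e0 ≤ E l j`, on the left each `y i` occurs at least `m p q / 2` times, and on the right Markov's
inequality bounds `e0 * ∑ p̂ j` by `(E p̂) l`. It remains to see that `m * ∑ i, y i ≥ 1`, which
holds because a consumer who receives at most one unit of each good has `t i ≤ ∑ j, u i j ≤ m`,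
while `∑ i, t i * y i = 1`.

A consumer with zero budget may have a negative `y i`, so the argument is run with the positive
parts `(y i)⁺`.
-/

open BigOperators

section Counting

variable {ι κ R : Type*} [CommSemiring R] [PartialOrder R] [IsOrderedRing R]

lemma mul_sum_filter_le_sum_mul [DecidableLE R] {s : Finset ι} {f g : ι → R}
    (hf : ∀ i ∈ s, 0 ≤ f i) (hg : ∀ i ∈ s, 0 ≤ g i) (c : R) :
    c * ∑ i ∈ s with c ≤ f i, g i ≤ ∑ i ∈ s, f i * g i := by
  calc c * ∑ i ∈ s with c ≤ f i, g i
      ≤ ∑ i ∈ s with c ≤ f i, f i * g i := by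
        rw [Finset.mul_sum]
        refine Finset.sum_le_sum fun i hi => ?_
        obtain ⟨his, hci⟩ := Finset.mem_filter.1 hi
        exact mul_le_mul_of_nonneg_right hci (hg i his)
    _ ≤ ∑ i ∈ s, f i * g i :=
        Finset.sum_le_sum_of_subset_of_nonneg (Finset.filter_subset _ _)
          fun i hi _ => mul_nonneg (hf i hi) (hg i hi)

lemma mul_sum_filter_le_mul_of_card_le [DecidableLE R] {s : Finset ι} {f z : ι → R} {a b K : R}
    (hz : ∀ i ∈ s, 0 ≤ z i) (hfz : ∀ i ∈ s, f i * z i ≤ b) (hb : 0 ≤ b)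
    (hK : (({i ∈ s | a ≤ f i}).card : R) ≤ K) :
    a * ∑ i ∈ s with a ≤ f i, z i ≤ K * b := by
  calc a * ∑ i ∈ s with a ≤ f i, z i
      ≤ ({i ∈ s | a ≤ f i}).card • b := by
        rw [Finset.mul_sum]
        refine Finset.sum_le_card_nsmul _ _ _ fun i hi => ?_
        obtain ⟨his, hai⟩ := Finset.mem_filter.1 hi
        exact (mul_le_mul_of_nonneg_right hai (hz i his)).trans (hfz i his)
    _ ≤ K * b := by
        rw [nsmul_eq_mul]
        exact mul_le_mul_of_nonneg_right hK hb

lemma mul_sum_le_sum_sum_filter {s : Finset ι} {t : Finset κ} (r : ι → κ → Prop)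
    [∀ i, DecidablePred (r i)] {z : ι → R} {M : R} (hz : ∀ i ∈ s, 0 ≤ z i)
    (hM : ∀ i ∈ s, M ≤ (({j ∈ t | r i j}).card : R)) :
    M * ∑ i ∈ s, z i ≤ ∑ j ∈ t, ∑ i ∈ s with r i j, z i := by
  calc M * ∑ i ∈ s, z i
      ≤ ∑ i ∈ s, ∑ j ∈ t with r i j, z i := by
        rw [Finset.mul_sum]
        refine Finset.sum_le_sum fun i hi => ?_
        rw [Finset.sum_const, nsmul_eq_mul]
        exact mul_le_mul_of_nonneg_right (hM i hi) (hz i hi)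
    _ = ∑ j ∈ t, ∑ i ∈ s with r i j, z i :=
        Finset.sum_sum_bipartiteAbove_eq_sum_sum_bipartiteBelow r fun i _ => z i

lemma mul_sum_le_mul_sum_mul_of_card_filter_le [Fintype ι] [Fintype κ] [DecidableLE R]
    {u : ι → κ → R} {e p : κ → R} {z : ι → R} {a c K M : R}
    (ha : 0 ≤ a) (hc : 0 ≤ c) (hK : 0 ≤ K)
    (he : ∀ j, 0 ≤ e j) (hp : ∀ j, 0 ≤ p j) (hz : ∀ i, 0 ≤ z i)
    (huz : ∀ i j, u i j * z i ≤ p j)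
    (hcol : ∀ j, ((Finset.univ.filter fun i => a ≤ u i j).card : R) ≤ K)
    (hrow : ∀ i, M ≤ ((Finset.univ.filter fun j => c ≤ e j ∧ a ≤ u i j).card : R)) :
    a * c * (M * ∑ i, z i) ≤ K * ∑ j, e j * p j := by
  have hcount : M * ∑ i, z i ≤ ∑ j with c ≤ e j, ∑ i with a ≤ u i j, z i :=
    mul_sum_le_sum_sum_filter (fun i j => a ≤ u i j) (fun i _ => hz i) fun i _ => by
      simpa only [Finset.filter_filter] using hrow i
  calc a * c * (M * ∑ i, z i)
      ≤ a * c * ∑ j with c ≤ e j, ∑ i with a ≤ u i j, z i :=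
        mul_le_mul_of_nonneg_left hcount (mul_nonneg ha hc)
    _ = c * ∑ j with c ≤ e j, a * ∑ i with a ≤ u i j, z i := by
        rw [← Finset.mul_sum]
        ring
    _ ≤ c * ∑ j with c ≤ e j, K * p j := by
        refine mul_le_mul_of_nonneg_left (Finset.sum_le_sum fun j _ => ?_) hc
        exact mul_sum_filter_le_mul_of_card_le (fun i _ => hz i) (fun i _ => huz i j) (hp j)
          (hcol j)
    _ = K * (c * ∑ j with c ≤ e j, p j) := by
        rw [← Finset.mul_sum]
        ring
    _ ≤ K * ∑ j, e j * p j :=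
        mul_le_mul_of_nonneg_left
          (mul_sum_filter_le_sum_mul (fun j _ => he j) (fun j _ => hp j) c) hK

end Counting

namespace FisherKKT

variable {n m : ℕ} {u : Fin n → Fin m → ℝ} {w : Fin n → ℝ} {x : Fin n → Fin m → ℝ}
  {t : Fin n → ℝ} {p : Fin m → ℝ} {y : Fin n → ℝ}

lemma price_eq_sum (h : FisherKKT n m u w x t p y) (j : Fin m) :
    p j = ∑ i, u i j * x i j * y i := by
  obtain ⟨-, hslack, -, hclear, -, -⟩ := h
  calc p j = ∑ i, x i j * p j := by rw [← Finset.sum_mul, hclear, one_mul]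
    _ = ∑ i, u i j * x i j * y i :=
        Finset.sum_congr rfl fun i _ => by linear_combination hslack i j

lemma sum_price_eq_sum_budget (h : FisherKKT n m u w x t p y) : ∑ j, p j = ∑ i, w i := by
  calc ∑ j, p j = ∑ j, ∑ i, u i j * x i j * y i := Finset.sum_congr rfl fun j _ => h.price_eq_sum j
    _ = ∑ i, ∑ j, u i j * x i j * y i := Finset.sum_comm
    _ = ∑ i, w i := by
        obtain ⟨hbudget, -, -, -, hutility, -⟩ := h
        refine Finset.sum_congr rfl fun i _ => ?_
        rw [← hbudget, hutility, Finset.sum_mul]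

lemma allocation_le_one (h : FisherKKT n m u w x t p y) (i : Fin n) (j : Fin m) : x i j ≤ 1 := by
  obtain ⟨-, -, -, hclear, -, hx⟩ := h
  rw [← hclear j]
  exact Finset.single_le_sum (f := fun k => x k j) (fun k _ => hx k j) (Finset.mem_univ i)

lemma utility_nonneg (h : FisherKKT n m u w x t p y) (hu : ∀ i j, 0 ≤ u i j) (i : Fin n) :
    0 ≤ t i := by
  obtain ⟨-, -, -, -, hutility, hx⟩ := h
  rw [hutility]
  exact Finset.sum_nonneg fun j _ => mul_nonneg (hu i j) (hx i j)

lemma utility_le_sum (h : FisherKKT n m u w x t p y) (hu : ∀ i j, 0 ≤ u i j) (i : Fin n) :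
    t i ≤ ∑ j, u i j := by
  have hx := h.allocation_le_one i
  obtain ⟨-, -, -, -, hutility, -⟩ := h
  rw [hutility]
  exact Finset.sum_le_sum fun j _ => mul_le_of_le_one_right (hu i j) (hx j)

lemma expenditure_nonneg (h : FisherKKT n m u w x t p y) (hu : ∀ i j, 0 ≤ u i j)
    (hw : ∀ i, 0 ≤ w i) (i : Fin n) (j : Fin m) : 0 ≤ u i j * x i j * y i := by
  obtain ⟨hbudget, -, -, -, hutility, hx⟩ := h
  have hux : ∀ k, 0 ≤ u i k * x i k := fun k => mul_nonneg (hu i k) (hx i k)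
  rcases le_total 0 (y i) with hy | hy
  · exact mul_nonneg (hux j) hy
  · have hle : u i j * x i j ≤ t i := by
      rw [hutility]
      exact Finset.single_le_sum (fun k _ => hux k) (Finset.mem_univ j)
    calc 0 ≤ w i := hw i
      _ = t i * y i := (hbudget i).symm
      _ ≤ u i j * x i j * y i := mul_le_mul_of_nonpos_right hle hy

lemma price_nonneg (h : FisherKKT n m u w x t p y) (hu : ∀ i j, 0 ≤ u i j) (hw : ∀ i, 0 ≤ w i)
    (j : Fin m) : 0 ≤ p j := by
  rw [h.price_eq_sum]
  exact Finset.sum_nonneg fun i _ => h.expenditure_nonneg hu hw i j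

lemma mul_posPart_le_price (h : FisherKKT n m u w x t p y) (hu : ∀ i j, 0 ≤ u i j)
    (hw : ∀ i, 0 ≤ w i) (i : Fin n) (j : Fin m) : u i j * (y i)⁺ ≤ p j := by
  have hp := h.price_nonneg hu hw j
  obtain ⟨-, -, hdual, -, -, -⟩ := h
  rw [posPart_def, mul_max_of_nonneg _ _ (hu i j), mul_zero]
  exact max_le (sub_nonneg.1 (hdual i j)) hp

lemma budget_le_sum_mul_posPart (h : FisherKKT n m u w x t p y) (hu : ∀ i j, 0 ≤ u i j)
    (i : Fin n) : w i ≤ (∑ j, u i j) * (y i)⁺ := by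
  calc w i = t i * y i := (h.1 i).symm
    _ ≤ t i * (y i)⁺ := mul_le_mul_of_nonneg_left (le_posPart _) (h.utility_nonneg hu i)
    _ ≤ (∑ j, u i j) * (y i)⁺ :=
        mul_le_mul_of_nonneg_right (h.utility_le_sum hu i) (posPart_nonneg _)

lemma mul_mul_sum_budget_le (h : FisherKKT n m u w x t p y) (hu : ∀ i j, 0 ≤ u i j)
    (husum : ∀ i, ∑ j, u i j ≤ m) (hw : ∀ i, 0 ≤ w i) {e : Fin m → ℝ} (he : ∀ j, 0 ≤ e j)
    {a c K M : ℝ} (ha : 0 ≤ a) (hc : 0 ≤ c) (hK : 0 ≤ K) (hM : 0 ≤ M)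
    (hcol : ∀ j, ((Finset.univ.filter fun i => a ≤ u i j).card : ℝ) ≤ K)
    (hrow : ∀ i, m * M ≤ ((Finset.univ.filter fun j => c ≤ e j ∧ a ≤ u i j).card : ℝ)) :
    a * c * (M * ∑ i, w i) ≤ K * ∑ j, e j * p j := by
  have hbudget : ∑ i, w i ≤ m * ∑ i, (y i)⁺ := by
    rw [Finset.mul_sum]
    refine Finset.sum_le_sum fun i _ => (h.budget_le_sum_mul_posPart hu i).trans ?_
    exact mul_le_mul_of_nonneg_right (husum i) (posPart_nonneg _)
  calc a * c * (M * ∑ i, w i) ≤ a * c * (M * (m * ∑ i, (y i)⁺)) := by gcongr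
    _ = a * c * (m * M * ∑ i, (y i)⁺) := by ring
    _ ≤ K * ∑ j, e j * p j :=
        mul_sum_le_mul_sum_mul_of_card_filter_le ha hc hK he (h.price_nonneg hu hw)
          (fun i => posPart_nonneg (y i)) (h.mul_posPart_le_price hu hw) hcol hrow

end FisherKKT

theorem budget_update_stays_in_Omega_general {n m : ℕ} {u E : Fin n → Fin m → ℝ}
    (hu : ∀ i j, 0 ≤ u i j) (husum : ∀ i, ∑ j, u i j ≤ m)
    (hE : ∀ l j, 0 ≤ E l j) (hEcol : ∀ j, ∑ l, E l j = 1)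
    {u0 e0 p q : ℝ} (hu0 : 0 ≤ u0) (he0 : 0 ≤ e0) (hp : 0 < p) (hq : 0 ≤ q)
    (ha : ∀ j, ((Finset.univ.filter fun i => u0 ≤ u i j).card : ℝ) ≤ 2 * n * p)
    (hb : ∀ l i, m * p * q / 2 ≤
      ((Finset.univ.filter fun j => e0 ≤ E l j ∧ u0 ≤ u i j).card : ℝ))
    {w : Fin n → ℝ} (hw : ∀ i, 0 ≤ w i) (hwsum : ∑ i, w i = 1)
    {x : Fin n → Fin m → ℝ} {t : Fin n → ℝ} {phat : Fin m → ℝ} {y : Fin n → ℝ}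
    (hkkt : FisherKKT n m u w x t phat y) :
    (∑ l, ∑ j, E l j * phat j) = 1 ∧
    ∀ l : Fin n, u0 * e0 * q / (4 * n) ≤ ∑ j, E l j * phat j := by
  refine ⟨?_, fun l => ?_⟩
  · calc ∑ l, ∑ j, E l j * phat j = ∑ j, phat j := by
          rw [Finset.sum_comm]
          simp only [← Finset.sum_mul, hEcol, one_mul]
      _ = 1 := hkkt.sum_price_eq_sum_budget.trans hwsum
  · have hn : (0 : ℝ) < n := Nat.cast_pos.2 l.pos
    have hbound : u0 * e0 * (p * q / 2 * ∑ i, w i) ≤ 2 * n * p * ∑ j, E l j * phat j :=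
      hkkt.mul_mul_sum_budget_le hu husum hw (hE l) hu0 he0 (by positivity) (by positivity) ha
        fun i => (by ring : (m : ℝ) * (p * q / 2) = m * p * q / 2).trans_le (hb l i)
    rw [hwsum, mul_one] at hbound
    rw [div_le_iff₀ (by positivity)]
    refine le_of_mul_le_mul_left ?_ hp
    linarith

/-- Under the deterministic counting conditions (a) and (b), the updated budget
vector `E p̂` obtained from Fisher equilibrium prices again lies in the set
`Ω = {w ∈ Δ : wᵢ ≥ u₀ e₀ q / (4n)}`. -/
theorem budget_update_stays_in_Omega (n m : ℕ) (hn : 0 < n)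
    (u E : Fin n → Fin m → ℝ)
    (hu01 : ∀ i j, u i j ∈ Set.Icc (0 : ℝ) 1)
    (hrow : ∀ i, ∃ j, 0 < u i j)
    (hcol : ∀ j, ∃ i, 0 < u i j)
    (hE01 : ∀ l j, E l j ∈ Set.Icc (0 : ℝ) 1)
    (hEcol : ∀ j, ∑ l, E l j = 1)
    (u0 e0 : ℝ) (hu0 : 0 < u0) (he0 : 0 < e0)
    (p q : ℝ) (hp : p ∈ Set.Ioc (0 : ℝ) 1) (hq : q ∈ Set.Ioc (0 : ℝ) 1)
    (ha : ∀ j : Fin m, (∃ i, u0 ≤ u i j) ∧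
      ((Finset.univ.filter fun i : Fin n => u0 ≤ u i j).card : ℝ) ≤ 2 * n * p)
    (hb : ∀ l i : Fin n,
      (m : ℝ) * p * q / 2 ≤
        ((Finset.univ.filter fun j : Fin m => e0 ≤ E l j ∧ u0 ≤ u i j).card : ℝ))
    (w : Fin n → ℝ) (hw : ∀ i, 0 < w i) (hwsum : ∑ i, w i = 1)
    (x : Fin n → Fin m → ℝ) (t : Fin n → ℝ) (phat : Fin m → ℝ) (y : Fin n → ℝ)
    (hkkt : FisherKKT n m u w x t phat y) :
    (∑ l, ∑ j, E l j * phat j) = 1 ∧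
    ∀ l : Fin n, u0 * e0 * q / (4 * n) ≤ ∑ j, E l j * phat j := by
  have husum (i : Fin n) : ∑ j, u i j ≤ m := by
    simpa using Finset.sum_le_card_nsmul Finset.univ (u i) 1 fun j _ => (hu01 i j).2
  exact budget_update_stays_in_Omega_general (fun i j => (hu01 i j).1) husum
    (fun l j => (hE01 l j).1) hEcol hu0.le he0.le hp.1 hq.1.le (fun j => (ha j).2) hb
    (fun i => (hw i).le) hwsum hkkt
end

section
/- Let E \in \mathbb{R}^{n\times m}, let \Omega \subseteq \{w \in \mathbb{R}^n : \sum_{i=1}^n w_i = 1\}, let \kappa > 0 and \gamma \in (0,1), and let P : \Omega \to \mathbb{R}^m be a map satisfying: (i) \sum_{j=1}^m P(w)_j = \sum_{i=1}^n w_i for every w \in \Omega, and (ii) \|P(w) - P(w')\| \le \kappa \|w - w'\| for all w, w' \in \Omega. If the operator norm satisfies \|E - \frac{1}{n}\mathbf{1}_n \mathbf{1}_m^T\| \le \gamma / \kappa, then the map T(w) = E \cdot P(w) is a contraction on \Omega with modulus \gamma, i.e., \|E P(w) - E P(w')\| \le \gamma \|w - w'\| for all w, w' \in \Omega. -/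
open BigOperators

noncomputable section

/-- Euclidean norm of a finite real vector. -/
def eNorm {k : ℕ} (v : Fin k → ℝ) : ℝ := Real.sqrt (∑ i, (v i) ^ 2)

open Matrix

theorem replicateCol_mulVec_eq_zero_of_sum_eq_zero {R ι ι' : Type*} [NonUnitalNonAssocSemiring R]
    [Fintype ι'] (c : ι → R) {v : ι' → R} (hv : ∑ j, v j = 0) : replicateCol ι' c *ᵥ v = 0 := by
  ext i
  simp only [mulVec, dotProduct, replicateCol_apply, ← Finset.mul_sum, hv, mul_zero,
    Pi.zero_apply]

theorem sub_replicateCol_mulVec_of_sum_eq_zero {R ι ι' : Type*} [NonUnitalNonAssocRing R]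
    [Fintype ι'] (E : Matrix ι ι' R) (c : ι → R) {v : ι' → R} (hv : ∑ j, v j = 0) :
    (E - replicateCol ι' c) *ᵥ v = E *ᵥ v := by
  rw [sub_mulVec, replicateCol_mulVec_eq_zero_of_sum_eq_zero c hv, sub_zero]

-- `p - q` is orthogonal to `𝟙`, so `E` and `E - c 𝟙ᵀ` agree on it, whatever the column `c`.
theorem eNorm_mulVec_sub_mulVec_le_of_sum_eq {n m : ℕ} {E : Matrix (Fin n) (Fin m) ℝ}
    {c : Fin n → ℝ} {L : ℝ}
    (hE : ∀ v, eNorm ((E - replicateCol (Fin m) c) *ᵥ v) ≤ L * eNorm v)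
    {p q : Fin m → ℝ} (hpq : ∑ j, p j = ∑ j, q j) :
    eNorm (E *ᵥ p - E *ᵥ q) ≤ L * eNorm (p - q) := by
  have hsum : ∑ j, (p - q) j = 0 := by
    simp only [Pi.sub_apply, Finset.sum_sub_distrib, hpq, sub_self]
  rw [← mulVec_sub, ← sub_replicateCol_mulVec_of_sum_eq_zero E c hsum]
  exact hE (p - q)

theorem fixed_point_map_contraction_general {k n m : ℕ} {E : Matrix (Fin n) (Fin m) ℝ}
    {c : Fin n → ℝ} {Ω : Set (Fin k → ℝ)} {P : (Fin k → ℝ) → (Fin m → ℝ)} {κ L : ℝ} (hL : 0 ≤ L)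
    (hPsum : ∀ w ∈ Ω, ∀ w' ∈ Ω, ∑ j, P w j = ∑ j, P w' j)
    (hPlip : ∀ w ∈ Ω, ∀ w' ∈ Ω, eNorm (P w - P w') ≤ κ * eNorm (w - w'))
    (hE : ∀ v, eNorm ((E - replicateCol (Fin m) c) *ᵥ v) ≤ L * eNorm v) :
    ∀ w ∈ Ω, ∀ w' ∈ Ω, eNorm (E *ᵥ P w - E *ᵥ P w') ≤ L * κ * eNorm (w - w') := by
  intro w hw w' hw'
  calc eNorm (E *ᵥ P w - E *ᵥ P w')
      ≤ L * eNorm (P w - P w') :=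
        eNorm_mulVec_sub_mulVec_le_of_sum_eq hE (hPsum w hw w' hw')
    _ ≤ L * (κ * eNorm (w - w')) := mul_le_mul_of_nonneg_left (hPlip w hw w' hw') hL
    _ = L * κ * eNorm (w - w') := (mul_assoc _ _ _).symm

/-- If the price map `P` sums to the total budget, is `κ`-Lipschitz on `Ω`, and the
centered endowment matrix `E - (1/n)𝟙ₙ𝟙ₘᵀ` has operator norm at most `γ/κ`, then the
fixed-point map `T(w) = E · P(w)` is a `γ`-contraction on `Ω`. -/
theorem fixed_point_map_contraction (n m : ℕ) (hn : 0 < n)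
    (E : Fin n → Fin m → ℝ)
    (Ω : Set (Fin n → ℝ)) (hΩ : ∀ w ∈ Ω, ∑ i, w i = 1)
    (κ γ : ℝ) (hκ : 0 < κ) (hγ : γ ∈ Set.Ioo (0 : ℝ) 1)
    (P : (Fin n → ℝ) → (Fin m → ℝ))
    (hPsum : ∀ w ∈ Ω, ∑ j, P w j = ∑ i, w i)
    (hPlip : ∀ w ∈ Ω, ∀ w' ∈ Ω, eNorm (P w - P w') ≤ κ * eNorm (w - w'))
    (hop : ∀ v : Fin m → ℝ,
      eNorm (fun l : Fin n => ∑ j, (E l j - 1 / (n : ℝ)) * v j) ≤ γ / κ * eNorm v) :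
    ∀ w ∈ Ω, ∀ w' ∈ Ω,
      eNorm (fun l : Fin n => (∑ j, E l j * P w j) - ∑ j, E l j * P w' j) ≤
        γ * eNorm (w - w') := by
  have hT := fixed_point_map_contraction_general (E := E) (c := fun _ => 1 / (n : ℝ))
    (div_pos hγ.1 hκ).le
    (fun w hw w' hw' => by rw [hPsum w hw, hPsum w' hw', hΩ w hw, hΩ w' hw']) hPlip hop
  rwa [div_mul_cancel₀ γ hκ.ne'] at hT

end
end
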